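/- arXiv:1008.3931 — 3 statements merged into one kernel-verified Lean document; each statement's English description precedes it below -/
import Mathlib

section
/- Let R be a smooth function on a neighborhood of the origin in ℝ² with nonvanishing Taylor series, R(0,0) = 0 and ∇R(0,0) = (0,0), which is in generic adapted coordinates, and set d* = max(2, d(R)). Let e be a compact edge of N(R) lying entirely in the closed half-plane {(t₁,t₂) : t₂ ≥ t₁}. If there exists y₀ ≠ 0 such that R_e(1,y₀) ≠ 0 and d/dy[R_e(1,y)] has a zero of order greater than d* − 1 at y₀, then e has slope −1 and the upper vertex of e lies on the t₂-axis. -/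
open MeasureTheory Set Filter Topology

noncomputable section

/-- Iterated partial derivative `∂ₓᵃ ∂ᵧᵇ R` at `(x, y)`. -/
def pderiv2 (R : ℝ → ℝ → ℝ) (a b : ℕ) (x y : ℝ) : ℝ :=
  iteratedDeriv a (fun x' => iteratedDeriv b (fun y' => R x' y') y) x

/-- Taylor coefficient `R_{ab} = ∂ₓᵃ ∂ᵧᵇ R(0,0) / (a! b!)`. -/
def tcoeff (R : ℝ → ℝ → ℝ) (a b : ℕ) : ℝ :=
  pderiv2 R a b 0 0 / (Nat.factorial a * Nat.factorial b)

/-- The support of the Taylor series of `R` at the origin. -/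
def tsupp (R : ℝ → ℝ → ℝ) : Set (ℕ × ℕ) := {p | tcoeff R p.1 p.2 ≠ 0}

/-- The Newton polygon of `R`. -/
def newtonPolygon (R : ℝ → ℝ → ℝ) : Set (ℝ × ℝ) :=
  convexHull ℝ (⋃ p ∈ tsupp R, {q : ℝ × ℝ | (p.1 : ℝ) ≤ q.1 ∧ (p.2 : ℝ) ≤ q.2})

/-- The Newton distance of `R`. -/
def newtonDist (R : ℝ → ℝ → ℝ) : ℝ := sInf {t : ℝ | (t, t) ∈ newtonPolygon R}

/-- `e` is a compact edge of `N(R)` of slope `-1/M` (with `M > 0`): it is the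
(one-dimensional, compact) face of the Newton polygon cut out by a supporting line
`t₁ + M t₂ = c`. -/
def IsCompactEdge (R : ℝ → ℝ → ℝ) (M : ℝ) (e : Set (ℝ × ℝ)) : Prop :=
  0 < M ∧ ∃ c : ℝ, (∀ q ∈ newtonPolygon R, c ≤ q.1 + M * q.2) ∧
    e = {q ∈ newtonPolygon R | q.1 + M * q.2 = c} ∧
    ∃ v w : ℝ × ℝ, v ≠ w ∧ e = segment ℝ v w

/-- The edge polynomial `R_e(x,y) = Σ_{(a,b) ∈ e ∩ supp R} R_{ab} x^a y^b`. -/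
def edgePoly (R : ℝ → ℝ → ℝ) (e : Set (ℝ × ℝ)) (x y : ℝ) : ℝ :=
  ∑' p : ℕ × ℕ,
    Set.indicator {p : ℕ × ℕ | ((p.1 : ℝ), (p.2 : ℝ)) ∈ e}
      (fun p => tcoeff R p.1 p.2 * x ^ p.1 * y ^ p.2) p

/-- `p` has a zero of order exactly `m` at `y₀`. -/
def ZeroOfOrder (p : ℝ → ℝ) (m : ℕ) (y₀ : ℝ) : Prop :=
  (∀ j < m, iteratedDeriv j p y₀ = 0) ∧ iteratedDeriv m p y₀ ≠ 0

/-- `R` is in nonadapted coordinates: the bisectrix meets the interior of a compact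
edge `e` such that `R_e(1, ⬝)` has a real zero of order greater than `d(R)`. -/
def IsNonadapted (R : ℝ → ℝ → ℝ) : Prop :=
  ∃ (M : ℝ) (e : Set (ℝ × ℝ)) (v w : ℝ × ℝ), IsCompactEdge R M e ∧ v ≠ w ∧
    e = segment ℝ v w ∧ (∃ t : ℝ, (t, t) ∈ openSegment ℝ v w) ∧
    ∃ (y₀ : ℝ) (m : ℕ), newtonDist R < (m : ℝ) ∧
      ZeroOfOrder (fun y => edgePoly R e 1 y) m y₀

/-- `R` is in generic adapted coordinates: adapted coordinates, every compact edge has slope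
at least `-1`, and the Newton polygon meets the `t₂`-axis. -/
def GenericAdapted (R : ℝ → ℝ → ℝ) : Prop :=
  ¬ IsNonadapted R ∧ (∀ M e, IsCompactEdge R M e → 1 ≤ M) ∧
    ∃ t : ℝ, ((0 : ℝ), t) ∈ newtonPolygon R

/-- `α_M(R) = min {a + M b : (a,b) ∈ supp R}`. -/
def alphaM (R : ℝ → ℝ → ℝ) (M : ℝ) : ℝ :=
  sInf {t : ℝ | ∃ p ∈ tsupp R, t = (p.1 : ℝ) + M * p.2}

/-- `R_M`, the sum of the terms of the Taylor series of `R` of minimal `M`-weighted degree. -/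
def RMpart (R : ℝ → ℝ → ℝ) (M : ℝ) (x y : ℝ) : ℝ :=
  ∑' p : ℕ × ℕ,
    Set.indicator {p : ℕ × ℕ | p ∈ tsupp R ∧ (p.1 : ℝ) + M * p.2 = alphaM R M}
      (fun p => tcoeff R p.1 p.2 * x ^ p.1 * y ^ p.2) p

/-- The Hessian determinant of `f`. -/
def hessDet (f : ℝ → ℝ → ℝ) (x y : ℝ) : ℝ :=
  pderiv2 f 2 0 x y * pderiv2 f 0 2 x y - (pderiv2 f 1 1 x y) ^ 2

/-- `F*(x,y) = (Σ_{(a,b) vertex of N(F)} x^{2a} y^{2b})^{1/2}`. -/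
def vertexFn (F : ℝ → ℝ → ℝ) (x y : ℝ) : ℝ :=
  Real.sqrt (∑' p : ℕ × ℕ,
    Set.indicator
      {p : ℕ × ℕ | ((p.1 : ℝ), (p.2 : ℝ)) ∈ (newtonPolygon F).extremePoints ℝ}
      (fun p => x ^ (2 * p.1) * y ^ (2 * p.2)) p)

/-- The point of the plane with coordinates the exponents of a monomial. -/
def expPoint (p : ℕ × ℕ) : ℝ × ℝ := ((p.1 : ℝ), (p.2 : ℝ))

theorem expPoint_mem_newtonPolygon {R : ℝ → ℝ → ℝ} {p : ℕ × ℕ} (hp : p ∈ tsupp R) :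
    expPoint p ∈ newtonPolygon R :=
  subset_convexHull ℝ _ (mem_biUnion hp ⟨le_rfl, le_rfl⟩)

/-- A face of the Newton polygon cut out by a supporting line of negative slope is spanned by the
support points on that line. -/
theorem face_subset_convexHull {R : ℝ → ℝ → ℝ} {M c : ℝ} (hM : 0 < M)
    (hc : ∀ q ∈ newtonPolygon R, c ≤ q.1 + M * q.2) :
    {q ∈ newtonPolygon R | q.1 + M * q.2 = c} ⊆
      convexHull ℝ (expPoint '' {p ∈ tsupp R | (p.1 : ℝ) + M * p.2 = c}) := by
  set H := convexHull ℝ (expPoint '' {p ∈ tsupp R | (p.1 : ℝ) + M * p.2 = c})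
  have hline : ∀ q ∈ H, q.1 + M * q.2 = c := by
    have hconv : Convex ℝ {q : ℝ × ℝ | q.1 + M * q.2 = c} := by
      intro x hx y hy a b _ _ hab
      simp only [mem_ofPred_eq, Prod.fst_add, Prod.snd_add, Prod.smul_fst, Prod.smul_snd,
        smul_eq_mul] at hx hy ⊢
      linear_combination a * hx + b * hy + c * hab
    refine fun q hq => convexHull_min ?_ hconv hq
    rintro _ ⟨p, hp, rfl⟩
    exact hp.2
  have hsub : newtonPolygon R ⊆ {q | c < q.1 + M * q.2} ∪ H := by
    refine convexHull_min ?_ ?_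
    · intro q hq
      simp only [mem_iUnion, mem_ofPred_eq, exists_prop] at hq
      obtain ⟨p, hp, h1, h2⟩ := hq
      have hpc : c ≤ (p.1 : ℝ) + M * p.2 := hc _ (expPoint_mem_newtonPolygon hp)
      by_cases hlt : c < q.1 + M * q.2
      · exact Or.inl hlt
      · have h3 := mul_le_mul_of_nonneg_left h2 hM.le
        have h4 : q.1 = p.1 := by linarith
        have h5 : q.2 = p.2 := mul_left_cancel₀ hM.ne' (by linarith)
        exact Or.inr (subset_convexHull ℝ _ ⟨p, ⟨hp, by linarith⟩, Prod.ext h4.symm h5.symm⟩)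
    · rw [convex_iff_forall_pos]
      intro x hx y hy a b ha hb hab
      by_cases hxy : x ∈ H ∧ y ∈ H
      · exact Or.inr (convex_convexHull ℝ _ hxy.1 hxy.2 ha.le hb.le hab)
      · left
        have hle : ∀ z ∈ {q : ℝ × ℝ | c < q.1 + M * q.2} ∪ H, c ≤ z.1 + M * z.2 :=
          fun z hz => hz.elim (fun h => le_of_lt h) (fun h => (hline z h).ge)
        simp only [mem_ofPred_eq, Prod.fst_add, Prod.snd_add, Prod.smul_fst, Prod.smul_snd,
          smul_eq_mul]
        have hx' := hle x hx
        have hy' := hle y hy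
        rcases hx with hx | hx
        · have hx : c < x.1 + M * x.2 := hx
          have hca : b = 1 - a := by linarith
          subst hca
          nlinarith [mul_pos ha (sub_pos.2 hx), mul_nonneg hb.le (sub_nonneg.2 hy')]
        · have hy : c < y.1 + M * y.2 := hy.resolve_right fun h => hxy ⟨hx, h⟩
          have hca : b = 1 - a := by linarith
          subst hca
          nlinarith [mul_pos hb (sub_pos.2 hy), mul_nonneg ha.le (sub_nonneg.2 hx')]
  rintro q ⟨hq, hqc⟩
  exact (hsub hq).resolve_left fun h => h.ne' hqc

theorem finite_setOf_weight_eq {M : ℝ} (hM : 0 < M) (c : ℝ) :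
    {p : ℕ × ℕ | (p.1 : ℝ) + M * p.2 = c}.Finite := by
  refine ((finite_Iic ⌊c⌋₊).prod (finite_Iic ⌊c / M⌋₊)).subset ?_
  rintro ⟨a, b⟩ h
  have h : (a : ℝ) + M * b = c := h
  have ha : (0 : ℝ) ≤ a := a.cast_nonneg
  have hb : 0 ≤ M * b := mul_nonneg hM.le b.cast_nonneg
  refine ⟨Nat.le_floor (by linarith), Nat.le_floor ?_⟩
  rw [le_div_iff₀ hM]
  linarith

/-- The endpoints of a compact edge are support points. -/
theorem IsCompactEdge.exists_vertices {R : ℝ → ℝ → ℝ} {M : ℝ} {e : Set (ℝ × ℝ)}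
    (he : IsCompactEdge R M e) :
    ∃ p ∈ tsupp R, ∃ q ∈ tsupp R, p.2 < q.2 ∧ e = segment ℝ (expPoint p) (expPoint q) ∧
      ∀ r ∈ tsupp R, expPoint r ∈ e → p.2 ≤ r.2 ∧ r.2 ≤ q.2 := by
  obtain ⟨hM, c, hc, hface, v, w, hvw, hseg⟩ := he
  set S := {p ∈ tsupp R | (p.1 : ℝ) + M * p.2 = c}
  have hsub : e ⊆ convexHull ℝ (expPoint '' S) := hface ▸ face_subset_convexHull hM hc
  have hfin : S.Finite := (finite_setOf_weight_eq hM c).subset fun p hp => hp.2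
  have hmem : ∀ r, r ∈ S ↔ r ∈ tsupp R ∧ expPoint r ∈ e := by
    intro r
    rw [hface]
    exact ⟨fun h => ⟨h.1, expPoint_mem_newtonPolygon h.1, h.2⟩, fun h => ⟨h.1, h.2.2⟩⟩
  have hne : S.Nonempty := by
    have hv : v ∈ convexHull ℝ (expPoint '' S) := hsub (hseg ▸ left_mem_segment ℝ v w)
    exact (convexHull_nonempty_iff.1 ⟨v, hv⟩).of_image
  obtain ⟨p, hpS, hp⟩ := exists_min_image S Prod.snd hfin hne
  obtain ⟨q, hqS, hq⟩ := exists_max_image S Prod.snd hfin hne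
  have hpq : p.2 < q.2 := by
    refine lt_of_le_of_ne (hp q hqS) fun hpq => hvw ?_
    have hsing : expPoint '' S ⊆ {expPoint p} := by
      rintro _ ⟨r, hr, rfl⟩
      have h2 : r.2 = p.2 := le_antisymm (hpq ▸ hq r hr) (hp r hr)
      have h1 : (r.1 : ℝ) + M * r.2 = p.1 + M * p.2 := hr.2.trans hpS.2.symm
      rw [h2] at h1
      exact Prod.ext (add_right_cancel h1) (congrArg (Nat.cast : ℕ → ℝ) h2)
    have hesing : e ⊆ {expPoint p} :=
      hsub.trans (convexHull_min hsing (convex_singleton _))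
    exact (hesing (hseg ▸ left_mem_segment ℝ v w)).trans
      (hesing (hseg ▸ right_mem_segment ℝ v w)).symm
  refine ⟨p, hpS.1, q, hqS.1, hpq, Subset.antisymm (hsub.trans ?_) ?_, fun r hr hre =>
    ⟨hp r ((hmem r).2 ⟨hr, hre⟩), hq r ((hmem r).2 ⟨hr, hre⟩)⟩⟩
  · refine convexHull_min ?_ (convex_segment _ _)
    rintro _ ⟨r, hr, rfl⟩
    have hpos : (0 : ℝ) < q.2 - p.2 := sub_pos.2 (Nat.cast_lt.2 hpq)
    have hpr : (p.2 : ℝ) ≤ r.2 := Nat.cast_le.2 (hp r hr)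
    have hrq : (r.2 : ℝ) ≤ q.2 := Nat.cast_le.2 (hq r hr)
    have hwr := hr.2
    have hwp := hpS.2
    have hwq := hqS.2
    refine ⟨(q.2 - r.2) / (q.2 - p.2), (r.2 - p.2) / (q.2 - p.2),
      div_nonneg (by linarith) hpos.le, div_nonneg (by linarith) hpos.le, ?_, ?_⟩
    · field_simp
      ring
    · have hwr' : (r.1 : ℝ) = c - M * r.2 := by linarith
      have hwp' : (p.1 : ℝ) = c - M * p.2 := by linarith
      have hwq' : (q.1 : ℝ) = c - M * q.2 := by linarith
      refine Prod.ext ?_ ?_ <;>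
        simp only [expPoint, Prod.fst_add, Prod.snd_add, Prod.smul_fst, Prod.smul_snd,
          smul_eq_mul, hwr', hwp', hwq'] <;> field_simp <;> ring
  · rw [hseg]
    refine (convex_segment v w).segment_subset ?_ ?_ <;> rw [← hseg]
    exacts [((hmem p).1 hpS).2, ((hmem q).1 hqS).2]

open Polynomial in
/-- `R_e(1, ⬝)` is a polynomial. If `p` and `q` are the lower and upper vertices of `e`, then its
degree is `q.2` and its coefficients of degree below `p.2` vanish. -/
theorem exists_polynomial_edgePoly {R : ℝ → ℝ → ℝ} {M : ℝ} {e : Set (ℝ × ℝ)}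
    (he : IsCompactEdge R M e) {p q : ℕ × ℕ} (hq : q ∈ tsupp R) (hqe : expPoint q ∈ e)
    (hbd : ∀ r ∈ tsupp R, expPoint r ∈ e → p.2 ≤ r.2 ∧ r.2 ≤ q.2) :
    ∃ P : ℝ[X], (fun y => edgePoly R e 1 y) = (fun y => P.eval y) ∧
      P.natDegree ≤ q.2 ∧ P.coeff q.2 ≠ 0 ∧ ∀ b < p.2, P.coeff b = 0 := by
  obtain ⟨hM, c, -, hface, -⟩ := he
  have hline : ∀ r, expPoint r ∈ e → (r.1 : ℝ) + M * r.2 = c := fun r hr =>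
    (hface ▸ hr : expPoint r ∈ {q ∈ newtonPolygon R | q.1 + M * q.2 = c}).2
  have hfin : {r | r ∈ tsupp R ∧ expPoint r ∈ e}.Finite :=
    (finite_setOf_weight_eq hM c).subset fun r hr => hline r hr.2
  set F := hfin.toFinset with hF
  have hmem : ∀ r, r ∈ F ↔ r ∈ tsupp R ∧ expPoint r ∈ e := fun r => by simp [hF]
  refine ⟨∑ r ∈ F, C (tcoeff R r.1 r.2) * X ^ r.2, ?_, ?_, ?_, ?_⟩
  · funext y
    rw [eval_finsetSum, edgePoly, tsum_eq_sum (s := F)]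
    · refine Finset.sum_congr rfl fun r hr => ?_
      rw [indicator_of_mem (by exact ((hmem r).1 hr).2)]
      simp
    · intro r hr
      by_cases hre : expPoint r ∈ e
      · have h0 : tcoeff R r.1 r.2 = 0 := by
          by_contra h
          exact hr ((hmem r).2 ⟨h, hre⟩)
        rw [indicator_of_mem (by exact hre), h0]
        simp
      · rw [indicator_of_notMem (by exact hre)]
  · refine natDegree_sum_le_of_forall_le _ _ fun r hr => ?_
    exact (natDegree_C_mul_X_pow_le _ _).trans
      (hbd r ((hmem r).1 hr).1 ((hmem r).1 hr).2).2
  · rw [finsetSum_coeff, Finset.sum_eq_single q]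
    · rw [coeff_C_mul_X_pow, if_pos rfl]
      exact hq
    · intro r hr hrq
      rw [coeff_C_mul_X_pow, if_neg]
      intro h
      have h1 := (hline r ((hmem r).1 hr).2).trans (hline q hqe).symm
      rw [h] at h1
      exact hrq (Prod.ext (Nat.cast_injective (add_right_cancel h1)) h.symm)
    · exact fun h => absurd ((hmem q).2 ⟨hq, hqe⟩) h
  · intro b hb
    rw [finsetSum_coeff]
    refine Finset.sum_eq_zero fun r hr => ?_
    rw [coeff_C_mul_X_pow, if_neg]
    have := (hbd r ((hmem r).1 hr).1 ((hmem r).1 hr).2).1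
    omega

open Polynomial in
theorem iteratedDeriv_polynomial_eval (P : ℝ[X]) (n : ℕ) :
    iteratedDeriv n (fun y => P.eval y) = fun y => (derivative^[n] P).eval y := by
  induction n generalizing P with
  | zero => simp
  | succ n ih =>
    rw [iteratedDeriv_succ', Function.iterate_succ_apply, ← ih]
    congr 1
    funext y
    exact P.deriv

open Polynomial in
/-- A polynomial with exponents between `k` and `n`, where `k > 0`, has a derivative which vanishes
to order at most `n - k` away from the origin. -/
theorem add_order_le_of_zeroOfOrder_deriv {P : ℝ[X]} {k n m : ℕ} (hk : 0 < k) (hn : 0 < n)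
    (hdeg : P.natDegree ≤ n) (hlead : P.coeff n ≠ 0) (hlow : ∀ b < k, P.coeff b = 0)
    {y₀ : ℝ} (hy₀ : y₀ ≠ 0)
    (hzero : ZeroOfOrder (fun y => deriv (fun y' => P.eval y') y) m y₀) : k + m ≤ n := by
  have hder : (fun y => deriv (fun y' => P.eval y') y) = fun y => (derivative P).eval y :=
    funext fun y => P.deriv
  rw [hder] at hzero
  have hne : derivative P ≠ 0 := by
    intro h
    have h1 := congrArg (fun Q => coeff Q (n - 1)) h
    simp only [coeff_derivative, coeff_zero, Nat.sub_add_cancel hn] at h1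
    exact (mul_ne_zero hlead (by positivity)) h1
  have hroot : (X - C y₀) ^ m ∣ derivative P := by
    rw [← le_rootMultiplicity_iff hne]
    rcases m with _ | m
    · exact Nat.zero_le _
    · refine (lt_rootMultiplicity_iff_isRoot_iterate_derivative hne).2 fun j hj => ?_
      have := hzero.1 j (Nat.lt_succ_of_le hj)
      rwa [iteratedDeriv_polynomial_eval] at this
  have hX : (X : ℝ[X]) ^ (k - 1) ∣ derivative P := by
    rw [X_pow_dvd_iff]
    intro b hb
    rw [coeff_derivative, hlow _ (by omega), zero_mul]
  have hcop : IsCoprime ((X - C y₀) ^ m) ((X : ℝ[X]) ^ (k - 1)) := by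
    have := isCoprime_X_sub_C_of_isUnit_sub (a := y₀) (b := 0) (by simpa using hy₀)
    rw [C_0, sub_zero] at this
    exact this.pow
  have hle := natDegree_le_of_dvd (hcop.mul_dvd hroot hX) hne
  rw [((monic_X_sub_C y₀).pow m).natDegree_mul (monic_X_pow _), natDegree_pow, natDegree_X_sub_C,
    natDegree_X_pow] at hle
  have := natDegree_derivative_le P
  omega

/-- A point on or above the bisectrix on a supporting line of `N(R)` of negative slope has first
coordinate at most `d(R)`. -/
theorem fst_le_newtonDist {R : ℝ → ℝ → ℝ} (hts : (tsupp R).Nonempty) {M : ℝ} (hM : 0 < M)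
    {v : ℝ × ℝ} (hv : v.1 ≤ v.2)
    (hsupp : ∀ q ∈ newtonPolygon R, v.1 + M * v.2 ≤ q.1 + M * q.2) : v.1 ≤ newtonDist R := by
  obtain ⟨p, hp⟩ := hts
  refine le_csInf ⟨max (p.1 : ℝ) p.2, ?_⟩ fun t ht => ?_
  · exact subset_convexHull ℝ _ (mem_biUnion hp ⟨le_max_left _ _, le_max_right _ _⟩)
  · have h : v.1 + M * v.2 ≤ t + M * t := hsupp _ ht
    have hMv := mul_le_mul_of_nonneg_left hv hM.le
    refine le_of_mul_le_mul_right (?_ : v.1 * (1 + M) ≤ t * (1 + M)) (by linarith)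
    linarith

/-- Lemma 2.1: if `R` is in generic adapted coordinates and `e` is a compact edge of `N(R)`
lying on or above the bisectrix such that `∂_y R_e(1,y)` has a zero of order greater than
`d* - 1` at some `y₀ ≠ 0` with `R_e(1, y₀) ≠ 0`, then `e` has slope `-1` and its upper vertex
lies on the `t₂`-axis. -/
theorem stmt_1 (R : ℝ → ℝ → ℝ) (U₀ : Set (ℝ × ℝ)) (hU₀ : U₀ ∈ 𝓝 ((0 : ℝ), (0 : ℝ)))
    (hsm : ContDiffOn ℝ (⊤ : ℕ∞) (fun p : ℝ × ℝ => R p.1 p.2) U₀)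
    (hts : (tsupp R).Nonempty)
    (h0 : R 0 0 = 0) (hgrad : fderiv ℝ (fun p : ℝ × ℝ => R p.1 p.2) (0, 0) = 0)
    (hga : GenericAdapted R)
    (M : ℝ) (e : Set (ℝ × ℝ)) (he : IsCompactEdge R M e)
    (habove : e ⊆ {q : ℝ × ℝ | q.1 ≤ q.2})
    (y₀ : ℝ) (hy₀ : y₀ ≠ 0) (hRe : edgePoly R e 1 y₀ ≠ 0)
    (m : ℕ) (hm : max 2 (newtonDist R) - 1 < (m : ℝ))
    (hzero : ZeroOfOrder (fun y => deriv (fun y' => edgePoly R e 1 y') y) m y₀) :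
    M = 1 ∧ ∃ v w : ℝ × ℝ, v ≠ w ∧ e = segment ℝ v w ∧ v.2 < w.2 ∧ w.1 = 0 := by
  have hM1 : 1 ≤ M := hga.2.1 M e he
  obtain ⟨p, hp, q, hq, hpq, hseg, hbd⟩ := he.exists_vertices
  have hpe : expPoint p ∈ e := hseg ▸ left_mem_segment ℝ _ _
  have hqe : expPoint q ∈ e := hseg ▸ right_mem_segment ℝ _ _
  obtain ⟨P, hP, hdeg, hlead, hlow⟩ := exists_polynomial_edgePoly he hq hqe hbd
  obtain ⟨hM, c, hc, hface, -⟩ := he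
  have hpc : (p.1 : ℝ) + M * p.2 = c := (hface ▸ hpe : _ ∈ {q ∈ newtonPolygon R | _}).2
  have hqc : (q.1 : ℝ) + M * q.2 = c := (hface ▸ hqe : _ ∈ {q ∈ newtonPolygon R | _}).2
  have hpabove : (p.1 : ℝ) ≤ p.2 := habove hpe
  have hdist : (p.1 : ℝ) ≤ newtonDist R :=
    fst_le_newtonDist hts hM (v := expPoint p) hpabove fun r hr => hpc.trans_le (hc r hr)
  have hpq' : (p.2 : ℝ) < q.2 := Nat.cast_lt.2 hpq
  have hslope : ((q.2 : ℝ) - p.2) ≤ M * (q.2 - p.2) :=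
    le_mul_of_one_le_left (by linarith) hM1
  have hq1 : (0 : ℝ) ≤ q.1 := q.1.cast_nonneg
  have hppos : 0 < p.2 := by
    have : (0 : ℝ) < p.2 := by linarith
    exact_mod_cast this
  have horder : p.2 + m ≤ q.2 := by
    refine add_order_le_of_zeroOfOrder_deriv hppos (by omega) hdeg hlead hlow hy₀ ?_
    have hP' : (fun y' => edgePoly R e 1 y') = fun y' => P.eval y' := hP
    rwa [hP'] at hzero
  have horder' : (p.2 : ℝ) + m ≤ q.2 := by exact_mod_cast horder
  have hm' : newtonDist R - 1 < m := (sub_le_sub_right (le_max_right _ _) 1).trans_lt hm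
  have hupper : p.1 + p.2 ≤ q.2 := by
    have : (p.1 : ℝ) + p.2 < q.2 + 1 := by linarith
    exact Nat.lt_succ_iff.1 (by exact_mod_cast this)
  have hupper' : (p.1 : ℝ) + p.2 ≤ q.2 := by exact_mod_cast hupper
  refine ⟨?_, expPoint p, expPoint q, ?_, hseg, hpq', ?_⟩
  · have hmul : (M - 1) * ((q.2 : ℝ) - p.2) ≤ 0 := by linarith
    nlinarith
  · exact fun h => hpq'.ne (congrArg Prod.snd h)
  · change (q.1 : ℝ) = 0
    linarith

end
end

section
/- Let R be a smooth function on a neighborhood of the origin in ℝ² with R(0,0) = 0 and nonvanishing Taylor series. Let (c,d) ∈ supp(R) and let M₁ > M₂ > 0 be such that a + M₁ b ≥ c + M₁ d and a + M₂ b ≥ c + M₂ d for every (a,b) ∈ supp(R) (so (c,d) is the vertex of N(R) at which the supporting lines of slopes −1/M₁ and −1/M₂ touch N(R)). Then there exist N > 0 and a neighborhood U of the origin such that for all (x,y) ∈ U with N|x|^{M₁} < |y| < (1/N)|x|^{M₂}, one has (1/2)|R_{cd}| |x|^c |y|^d < |R(x,y)| < 2 |R_{cd}| |x|^c |y|^d.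 -/
open MeasureTheory Set Filter Topology

noncomputable section

/-- Taylor's formula with a Lagrange-type bound, for a sequence of successive derivatives. -/
theorem abs_sub_taylor_le (K : ℕ) : ∀ (F : ℕ → ℝ → ℝ) (r C : ℝ),
    (∀ n t, |t| ≤ r → HasDerivAt (F n) (F (n + 1) t) t) → (∀ t, |t| ≤ r → |F K t| ≤ C) →
    ∀ t, |t| ≤ r →
      |F 0 t - ∑ b ∈ Finset.range K, F b 0 / (b.factorial : ℝ) * t ^ b| ≤ C * |t| ^ K := by
  induction K with
  | zero => intro F r C _ hC t ht; simpa using hC t ht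
  | succ K ih =>
    intro F r C hF hC t ht
    have key := ih (fun n => F (n + 1)) r C (fun n => hF (n + 1)) hC
    have hC0 : 0 ≤ C := (abs_nonneg _).trans (hC t ht)
    let E : ℝ → ℝ := fun s =>
      F 0 s - ∑ b ∈ Finset.range (K + 1), F b 0 / (b.factorial : ℝ) * s ^ b
    have hE : ∀ s, |s| ≤ r → HasDerivAt E
        (F 1 s - ∑ b ∈ Finset.range K, F (b + 1) 0 / (b.factorial : ℝ) * s ^ b) s := by
      intro s hs
      refine (hF 0 s hs).sub ?_
      have h : ∀ b ∈ Finset.range (K + 1), HasDerivAt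
          (fun s : ℝ => F b 0 / (b.factorial : ℝ) * s ^ b)
          (F b 0 / (b.factorial : ℝ) * (b * s ^ (b - 1))) s :=
        fun b _ => (hasDerivAt_pow b s).const_mul _
      have h' := HasDerivAt.fun_sum h
      rw [Finset.sum_range_succ'] at h'
      simp only [Nat.cast_zero, zero_mul, mul_zero, add_zero] at h'
      convert h' using 1
      refine Finset.sum_congr rfl fun b _ => ?_
      rw [Nat.factorial_succ]
      push_cast
      have : (b.factorial : ℝ) ≠ 0 := by positivity
      have : (b : ℝ) + 1 ≠ 0 := by positivity
      field_simp
    have hmv := (convex_Icc (-|t|) |t|).norm_image_sub_le_of_norm_hasDerivWithin_le (f := E)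
      (C := C * |t| ^ K)
      (fun s hs => (hE s ((abs_le.2 hs).trans ht)).hasDerivWithinAt)
      (fun s hs => (key s ((abs_le.2 hs).trans ht)).trans (by
        have : |s| ≤ |t| := abs_le.2 hs
        gcongr))
      (x := 0) (y := t) (abs_le.1 (by simp)) (abs_le.1 le_rfl)
    have hE0 : E 0 = 0 := by
      simp [E, Finset.sum_range_succ']
    rw [hE0, sub_zero, sub_zero, Real.norm_eq_abs, Real.norm_eq_abs] at hmv
    calc |E t| ≤ _ := hmv
      _ = _ := by ring

theorem ContDiffOn.iteratedDeriv_of_isOpen {g : ℝ → ℝ} {s : Set ℝ} (hs : IsOpen s)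
    (hg : ContDiffOn ℝ (⊤ : ℕ∞) g s) (n : ℕ) : ContDiffOn ℝ (⊤ : ℕ∞) (iteratedDeriv n g) s := by
  induction n with
  | zero => simpa using hg
  | succ n ih =>
    rw [iteratedDeriv_succ]
    exact ((contDiffOn_infty_iff_deriv_of_isOpen hs).1 ih).2

/-- Iterated derivatives in the second variable of a smooth function are jointly smooth. -/
theorem contDiffOn_iteratedDeriv_snd {R : ℝ → ℝ → ℝ} {U : Set (ℝ × ℝ)} (hU : IsOpen U)
    (hR : ContDiffOn ℝ (⊤ : ℕ∞) (fun p : ℝ × ℝ => R p.1 p.2) U) (b : ℕ) :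
    ContDiffOn ℝ (⊤ : ℕ∞) (fun p : ℝ × ℝ => iteratedDeriv b (R p.1) p.2) U := by
  induction b with
  | zero => simpa using hR
  | succ b ih =>
    have h1 : ContDiffOn ℝ (⊤ : ℕ∞)
        (fun p => fderiv ℝ (fun p : ℝ × ℝ => iteratedDeriv b (R p.1) p.2) p ((0 : ℝ), (1 : ℝ))) U :=
      ((contDiffOn_infty_iff_fderiv_of_isOpen hU).1 ih).2.clm_apply contDiffOn_const
    refine h1.congr fun p hp => ?_
    have hd := ((ih.contDiffAt (hU.mem_nhds hp)).differentiableAt (by simp)).hasFDerivAt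
    have hl : HasDerivAt (fun y : ℝ => (p.1, y)) ((0 : ℝ), (1 : ℝ)) p.2 :=
      (hasDerivAt_const _ _).prodMk (hasDerivAt_id _)
    rw [iteratedDeriv_succ]
    exact (hd.comp_hasDerivAt (f := fun y : ℝ => (p.1, y)) p.2 hl).deriv

/-- Taylor expansion in two variables over the square `a, b < K`. -/
theorem exists_abs_sub_taylor_le {R : ℝ → ℝ → ℝ} {U₀ : Set (ℝ × ℝ)}
    (hU₀ : U₀ ∈ 𝓝 ((0 : ℝ), (0 : ℝ)))
    (hsm : ContDiffOn ℝ (⊤ : ℕ∞) (fun p : ℝ × ℝ => R p.1 p.2) U₀) (K : ℕ) :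
    ∃ r > (0 : ℝ), ∃ C ≥ (0 : ℝ), ∀ x y : ℝ, |x| ≤ r → |y| ≤ r →
      |R x y - ∑ p ∈ Finset.range K ×ˢ Finset.range K, tcoeff R p.1 p.2 * x ^ p.1 * y ^ p.2| ≤
        C * (|x| ^ K + |y| ^ K) := by
  have hUo : IsOpen (interior U₀) := isOpen_interior
  obtain ⟨r', hr', hball⟩ := Metric.nhds_basis_closedBall.mem_iff.1 (interior_mem_nhds.2 hU₀)
  set r := min r' 1 with hr
  have hr0 : 0 < r := lt_min hr' one_pos
  have hmem : ∀ x y : ℝ, |x| ≤ r → |y| ≤ r → (x, y) ∈ interior U₀ := by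
    intro x y hx hy
    refine hball ?_
    simp only [Metric.mem_closedBall, Prod.dist_eq, Real.dist_eq, sub_zero]
    exact max_le (hx.trans (min_le_left _ _)) (hy.trans (min_le_left _ _))
  have hH := contDiffOn_iteratedDeriv_snd hUo (hsm.mono interior_subset)
  -- bound for the `K`-th derivative in `y`
  have hcomp : IsCompact (Icc (-r) r ×ˢ Icc (-r) r) := isCompact_Icc.prod isCompact_Icc
  obtain ⟨C₀, hC₀⟩ := hcomp.exists_bound_of_continuousOn
    ((hH K).continuousOn.mono fun p hp => hmem p.1 p.2 (abs_le.2 hp.1) (abs_le.2 hp.2))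
  -- the functions of `x` alone
  let V : Set ℝ := (fun x : ℝ => (x, (0 : ℝ))) ⁻¹' interior U₀
  have hV : IsOpen V := hUo.preimage (by fun_prop)
  have hVmem : ∀ x, |x| ≤ r → x ∈ V := fun x hx => hmem x 0 hx (by simpa using hr0.le)
  have hg : ∀ b, ContDiffOn ℝ (⊤ : ℕ∞) (fun x => iteratedDeriv b (R x) 0) V := fun b =>
    (hH b).comp (f := fun x : ℝ => (x, (0 : ℝ))) (by fun_prop) fun x hx => hx
  have hgn := fun b => (hg b).iteratedDeriv_of_isOpen hV
  have hD : ∀ b, ∃ D, ∀ x, |x| ≤ r →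
      |iteratedDeriv K (fun x => iteratedDeriv b (R x) 0) x| ≤ D := by
    intro b
    obtain ⟨D, hD⟩ := (isCompact_Icc (a := -r) (b := r)).exists_bound_of_continuousOn
      ((hgn b K).continuousOn.mono fun x hx => hVmem x (abs_le.2 hx))
    exact ⟨D, fun x hx => hD x (abs_le.1 hx)⟩
  choose D hD using hD
  have hD0 : ∀ b, 0 ≤ D b := fun b => (abs_nonneg _).trans (hD b 0 (by simpa using hr0.le))
  have hC0 : 0 ≤ C₀ := (norm_nonneg _).trans
    (hC₀ (0, 0) ⟨⟨by simpa using hr0.le, hr0.le⟩, ⟨by simpa using hr0.le, hr0.le⟩⟩)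
  have hS0 : 0 ≤ ∑ b ∈ Finset.range K, D b := Finset.sum_nonneg fun b _ => hD0 b
  refine ⟨r, hr0, C₀ + ∑ b ∈ Finset.range K, D b, by positivity, fun x y hx hy => ?_⟩
  have hy1 : |y| ≤ 1 := hy.trans (min_le_right _ _)
  have e1 : |R x y - ∑ b ∈ Finset.range K,
      iteratedDeriv b (R x) 0 / (b.factorial : ℝ) * y ^ b| ≤ C₀ * |y| ^ K := by
    have := abs_sub_taylor_le K (fun b => iteratedDeriv b (R x)) r C₀ (fun n t ht => by
      have h1 := ((hH n).contDiffAt (hUo.mem_nhds (hmem x t hx ht))).differentiableAt (by simp)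
      have h2 : DifferentiableAt ℝ (iteratedDeriv n (R x)) t :=
        DifferentiableAt.comp (f := fun y : ℝ => (x, y)) t h1 (by fun_prop)
      have h3 := h2.hasDerivAt
      rwa [← iteratedDeriv_succ] at h3)
      (fun t ht => hC₀ (x, t) ⟨abs_le.1 hx, abs_le.1 ht⟩) y hy
    simpa using this
  have e2 : ∀ b, |iteratedDeriv b (R x) 0 - ∑ a ∈ Finset.range K,
      pderiv2 R a b 0 0 / (a.factorial : ℝ) * x ^ a| ≤ D b * |x| ^ K := by
    intro b
    have := abs_sub_taylor_le K (fun a => iteratedDeriv a (fun x => iteratedDeriv b (R x) 0)) r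
      (D b) (fun n t ht => by
        have h3 := (((hgn b n).contDiffAt (hV.mem_nhds (hVmem t ht))).differentiableAt
          (by simp)).hasDerivAt
        rwa [← iteratedDeriv_succ] at h3) (hD b) x hx
    simpa [pderiv2] using this
  have hsplit : R x y - ∑ p ∈ Finset.range K ×ˢ Finset.range K,
        tcoeff R p.1 p.2 * x ^ p.1 * y ^ p.2 =
      (R x y - ∑ b ∈ Finset.range K, iteratedDeriv b (R x) 0 / (b.factorial : ℝ) * y ^ b) +
      ∑ b ∈ Finset.range K, (iteratedDeriv b (R x) 0 - ∑ a ∈ Finset.range K,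
        pderiv2 R a b 0 0 / (a.factorial : ℝ) * x ^ a) * (y ^ b / (b.factorial : ℝ)) := by
    rw [Finset.sum_product_right, sub_add, ← Finset.sum_sub_distrib]
    congr 1
    refine Finset.sum_congr rfl fun b _ => ?_
    rw [sub_mul, Finset.sum_mul, div_mul_eq_mul_div, mul_div_assoc, sub_sub_cancel]
    refine Finset.sum_congr rfl fun a _ => ?_
    rw [tcoeff]
    field_simp
  rw [hsplit]
  refine (abs_add_le _ _).trans ?_
  have e3 : |∑ b ∈ Finset.range K, (iteratedDeriv b (R x) 0 - ∑ a ∈ Finset.range K,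
        pderiv2 R a b 0 0 / (a.factorial : ℝ) * x ^ a) * (y ^ b / (b.factorial : ℝ))| ≤
      (∑ b ∈ Finset.range K, D b) * |x| ^ K := by
    rw [Finset.sum_mul]
    refine (Finset.abs_sum_le_sum_abs _ _).trans (Finset.sum_le_sum fun b _ => ?_)
    rw [abs_mul]
    have h1 : |y ^ b / (b.factorial : ℝ)| ≤ 1 := by
      rw [abs_div, abs_pow, Nat.abs_cast]
      refine div_le_one_of_le₀ ?_ (by positivity)
      exact (pow_le_one₀ (abs_nonneg y) hy1).trans (by exact_mod_cast b.factorial_pos)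
    calc _ ≤ D b * |x| ^ K * 1 := by
          gcongr
          · exact mul_nonneg (hD0 b) (by positivity)
          · exact e2 b
      _ = _ := mul_one _
  have := mul_nonneg hC0 (pow_nonneg (abs_nonneg x) K)
  have := mul_nonneg hS0 (pow_nonneg (abs_nonneg y) K)
  nlinarith [e1, e3]

/-- A monomial whose exponent lies weakly above both supporting lines through `(c, d)` is
dominated, in the region between the two curves, by the monomial at `(c, d)`. -/
theorem monomial_le_vertex_monomial {X Y N M₁ M₂ : ℝ} {a b c d : ℕ} (hX : 0 < X) (hX1 : X ≤ 1)
    (hN : 1 ≤ N) (hY1 : N * X ^ M₁ < Y) (hY2 : Y < 1 / N * X ^ M₂) (hne : (a, b) ≠ (c, d))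
    (h₁ : (c : ℝ) + M₁ * d ≤ a + M₁ * b) (h₂ : (c : ℝ) + M₂ * d ≤ a + M₂ * b) :
    X ^ a * Y ^ b ≤ (1 / N + X) * (X ^ c * Y ^ d) := by
  have hN0 : 0 < N := by linarith
  have hY : 0 < Y := lt_trans (by positivity) hY1
  rcases lt_trichotomy b d with hb | rfl | hb
  · obtain ⟨k, rfl⟩ := Nat.exists_eq_add_of_lt hb
    have h1 : X ^ a ≤ X ^ c * (X ^ M₁) ^ (k + 1) := by
      rw [← Real.rpow_natCast (X ^ M₁), ← Real.rpow_mul hX.le, ← Real.rpow_natCast X c,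
        ← Real.rpow_natCast X a, ← Real.rpow_add hX]
      apply Real.rpow_le_rpow_of_exponent_ge hX hX1
      push_cast at h₁ ⊢
      linarith
    have h2 : X ^ M₁ ≤ 1 / N * Y := by
      rw [one_div, inv_mul_eq_div, le_div_iff₀ hN0]; linarith
    have h3 : (X ^ M₁) ^ (k + 1) ≤ 1 / N * Y ^ (k + 1) := by
      calc (X ^ M₁) ^ (k + 1) ≤ (1 / N * Y) ^ (k + 1) := by gcongr
        _ = (1 / N) ^ (k + 1) * Y ^ (k + 1) := mul_pow _ _ _
        _ ≤ (1 / N) * Y ^ (k + 1) := by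
          gcongr
          exact pow_le_of_le_one (by positivity) ((div_le_one hN0).2 hN) (by simp)
    calc X ^ a * Y ^ b ≤ X ^ c * (1 / N * Y ^ (k + 1)) * Y ^ b := by
          gcongr; exact h1.trans (by gcongr)
      _ = 1 / N * (X ^ c * Y ^ (b + k + 1)) := by ring
      _ ≤ _ := by gcongr; linarith
  · have hca : c ≤ a := by
      have : (c : ℝ) ≤ a := by linarith
      exact_mod_cast this
    have hca' : c + 1 ≤ a := by
      rcases hca.lt_or_eq with h | h
      · exact h
      · exact absurd (by rw [h]) hne
    calc X ^ a * Y ^ b ≤ X ^ (c + 1) * Y ^ b := by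
          gcongr ?_ * _; exact pow_le_pow_of_le_one hX.le hX1 hca'
      _ = X * (X ^ c * Y ^ b) := by ring
      _ ≤ _ := by gcongr; linarith [show 0 < 1 / N by positivity]
  · obtain ⟨k, rfl⟩ := Nat.exists_eq_add_of_lt hb
    have h1 : X ^ a * (X ^ M₂) ^ (k + 1) ≤ X ^ c := by
      rw [← Real.rpow_natCast (X ^ M₂), ← Real.rpow_mul hX.le, ← Real.rpow_natCast X c,
        ← Real.rpow_natCast X a, ← Real.rpow_add hX]
      apply Real.rpow_le_rpow_of_exponent_ge hX hX1
      push_cast at h₂ ⊢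
      linarith
    have h3 : Y ^ (k + 1) ≤ 1 / N * (X ^ M₂) ^ (k + 1) := by
      calc Y ^ (k + 1) ≤ (1 / N * X ^ M₂) ^ (k + 1) := by gcongr
        _ = (1 / N) ^ (k + 1) * (X ^ M₂) ^ (k + 1) := mul_pow _ _ _
        _ ≤ _ := by
          gcongr
          exact pow_le_of_le_one (by positivity) ((div_le_one hN0).2 hN) (by simp)
    calc X ^ a * Y ^ (d + k + 1) = X ^ a * Y ^ (k + 1) * Y ^ d := by ring
      _ ≤ X ^ a * (1 / N * (X ^ M₂) ^ (k + 1)) * Y ^ d := by gcongr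
      _ = 1 / N * (X ^ a * (X ^ M₂) ^ (k + 1)) * Y ^ d := by ring
      _ ≤ 1 / N * X ^ c * Y ^ d := by gcongr
      _ = 1 / N * (X ^ c * Y ^ d) := by ring
      _ ≤ _ := by gcongr; linarith

/-- Lemma 2.2 (vertex between two compact edges): near the origin, in the region
`N|x|^{M₁} < |y| < (1/N)|x|^{M₂}`, `R` is comparable to its vertex monomial. -/
theorem stmt_2 (R : ℝ → ℝ → ℝ) (U₀ : Set (ℝ × ℝ)) (hU₀ : U₀ ∈ 𝓝 ((0 : ℝ), (0 : ℝ)))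
    (hsm : ContDiffOn ℝ (⊤ : ℕ∞) (fun p : ℝ × ℝ => R p.1 p.2) U₀)
    (h0 : R 0 0 = 0) (hts : (tsupp R).Nonempty)
    (c d : ℕ) (hcd : (c, d) ∈ tsupp R) (M₁ M₂ : ℝ) (hM₂ : 0 < M₂) (hM : M₂ < M₁)
    (h₁ : ∀ p ∈ tsupp R, (c : ℝ) + M₁ * d ≤ (p.1 : ℝ) + M₁ * p.2)
    (h₂ : ∀ p ∈ tsupp R, (c : ℝ) + M₂ * d ≤ (p.1 : ℝ) + M₂ * p.2) :
    ∃ N > (0 : ℝ), ∃ U ∈ 𝓝 ((0 : ℝ), (0 : ℝ)), ∀ x y : ℝ, (x, y) ∈ U →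
      N * |x| ^ M₁ < |y| → |y| < (1 / N) * |x| ^ M₂ →
      (1 / 2) * |tcoeff R c d| * |x| ^ c * |y| ^ d < |R x y| ∧
        |R x y| < 2 * |tcoeff R c d| * |x| ^ c * |y| ^ d := by
  -- `K` is so large that both pure powers `x ^ K`, `y ^ K` lie far above the supporting lines
  obtain ⟨K, hK⟩ := exists_nat_gt
    (max (max (c : ℝ) d) (max (c + 1 + M₁ * d) (d + (c + 1) / M₂)))
  simp only [max_lt_iff, Nat.cast_lt] at hK
  obtain ⟨⟨hKc, hKd⟩, hK1, hK2⟩ := hK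
  have hK2' : (c : ℝ) + 1 + M₂ * d ≤ M₂ * K := by
    have h : (c + 1) / M₂ < (K : ℝ) - d := by linarith
    rw [div_lt_iff₀ hM₂] at h
    linarith
  obtain ⟨r, hr, C, hC, hT⟩ := exists_abs_sub_taylor_le hU₀ hsm K
  set T := |tcoeff R c d| with hTdef
  have hT0 : 0 < T := abs_pos.2 hcd
  set s := Finset.range K ×ˢ Finset.range K with hs
  have hcds : (c, d) ∈ s := by simp [hs, hKc, hKd]
  set S := ∑ p ∈ s.erase (c, d), |tcoeff R p.1 p.2| with hS
  have hS0 : 0 ≤ S := Finset.sum_nonneg fun _ _ => abs_nonneg _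
  set B := S + 2 * C with hB
  have hB0 : 0 ≤ B := by positivity
  set N := 4 * B / T + 1 with hN
  have hN1 : 1 ≤ N := by
    have : 0 ≤ 4 * B / T := by positivity
    linarith
  have hN0 : 0 < N := by linarith
  have hBN : B * (1 / N) < T / 4 := by
    rw [mul_one_div, div_lt_iff₀ hN0, hN]
    have : T / 4 * (4 * B / T + 1) = B + T / 4 := by field_simp
    linarith
  clear_value N B S
  set δ := min r (1 / N) with hδ
  have hδ0 : 0 < δ := lt_min hr (by positivity)
  refine ⟨N, hN0, Metric.ball ((0 : ℝ), (0 : ℝ)) δ, Metric.ball_mem_nhds _ hδ0, ?_⟩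
  intro x y hxy hy1 hy2
  simp only [Metric.mem_ball, Prod.dist_eq, Real.dist_eq, sub_zero, max_lt_iff] at hxy
  obtain ⟨hxδ, hyδ⟩ := hxy
  have hE := hT x y (hxδ.le.trans (min_le_left _ _)) (hyδ.le.trans (min_le_left _ _))
  have hxN : |x| ≤ 1 / N := hxδ.le.trans (min_le_right _ _)
  have hX1 : |x| ≤ 1 := hxN.trans ((div_le_one hN0).2 hN1)
  have hX : 0 < |x| := by
    rcases (abs_nonneg x).eq_or_lt with h | h
    · rw [← h, Real.zero_rpow hM₂.ne', mul_zero] at hy2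
      exact absurd hy2 (abs_nonneg y).not_gt
    · exact h
  have hY : 0 < |y| := lt_trans (by positivity) hy1
  set m := |x| ^ c * |y| ^ d with hm
  have hm0 : 0 < m := by positivity
  have hxK : |x| ^ K ≤ (1 / N + |x|) * m := by
    simpa using monomial_le_vertex_monomial (a := K) (b := 0) (c := c) (d := d) hX hX1 hN1 hy1 hy2
      (by simp [hKc.ne']) (by push_cast; linarith) (by
        push_cast
        have : M₂ * d ≤ M₁ * d := by gcongr
        linarith)
  have hyK : |y| ^ K ≤ (1 / N + |x|) * m := by
    simpa using monomial_le_vertex_monomial (a := 0) (b := K) (c := c) (d := d) hX hX1 hN1 hy1 hy2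
      (by simp [hKd.ne']) (by
        push_cast
        have : M₂ * (K - d) ≤ M₁ * ((K : ℝ) - d) := by
          have : (d : ℝ) ≤ K := by exact_mod_cast hKd.le
          have : 0 ≤ (K : ℝ) - d := by linarith
          gcongr
        linarith) (by push_cast; linarith)
  have hsum : |∑ p ∈ s.erase (c, d), tcoeff R p.1 p.2 * x ^ p.1 * y ^ p.2| ≤
      S * ((1 / N + |x|) * m) := by
    rw [hS, Finset.sum_mul]
    refine (Finset.abs_sum_le_sum_abs _ _).trans (Finset.sum_le_sum fun p hp => ?_)
    rw [mul_assoc, abs_mul, abs_mul, abs_pow, abs_pow]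
    by_cases hp0 : tcoeff R p.1 p.2 = 0
    · simp [hp0]
    · exact mul_le_mul_of_nonneg_left (monomial_le_vertex_monomial hX hX1 hN1 hy1 hy2
        (Finset.ne_of_mem_erase hp) (h₁ p hp0) (h₂ p hp0)) (abs_nonneg _)
  have hdiff : |R x y - tcoeff R c d * x ^ c * y ^ d| < T / 2 * m := by
    rw [← Finset.add_sum_erase s _ hcds] at hE
    have htri := abs_add_le
      (R x y - (tcoeff R c d * x ^ c * y ^ d +
        ∑ p ∈ s.erase (c, d), tcoeff R p.1 p.2 * x ^ p.1 * y ^ p.2))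
      (∑ p ∈ s.erase (c, d), tcoeff R p.1 p.2 * x ^ p.1 * y ^ p.2)
    rw [sub_add_eq_sub_sub, sub_add_cancel, ← sub_add_eq_sub_sub] at htri
    have hCm : C * (|x| ^ K + |y| ^ K) ≤ 2 * C * ((1 / N + |x|) * m) := by
      have := mul_le_mul_of_nonneg_left (add_le_add hxK hyK) hC
      linarith
    have hBm : B * (1 / N + |x|) < T / 2 := by
      have := mul_le_mul_of_nonneg_left hxN hB0
      linarith
    calc _ ≤ S * ((1 / N + |x|) * m) + 2 * C * ((1 / N + |x|) * m) := by linarith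
      _ = B * (1 / N + |x|) * m := by rw [hB]; ring
      _ < _ := by gcongr
  have hmain : |tcoeff R c d * x ^ c * y ^ d| = T * m := by
    rw [mul_assoc, abs_mul, abs_mul, abs_pow, abs_pow]
  have hTm : 0 < T * m := by positivity
  have hlow := abs_sub_abs_le_abs_sub (tcoeff R c d * x ^ c * y ^ d) (R x y)
  have hup := abs_sub_abs_le_abs_sub (R x y) (tcoeff R c d * x ^ c * y ^ d)
  rw [abs_sub_comm] at hlow
  rw [hmain] at hlow hup
  rw [mul_assoc _ (|x| ^ c), mul_assoc _ (|x| ^ c), ← hm]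
  constructor <;> linarith

end
end

section
/- Let f be a smooth function on a neighborhood of (0,0) in ℝ² with f(0,0) = 0 and ∇f(0,0) = (0,0), let M ≥ 1, and let ψ be a smooth function of one variable with ψ^{(j)}(0) = 0 for every integer j < M. Set F(x,y) = f(x, y + ψ(x)) and α = α_M(F), and suppose r ≠ 0 satisfies F_M(1,r) ≠ 0, ∂_y F_M(1,r) = 0 and ∂_y² F_M(1,r) = 0. Then there exist C, μ, ν > 0 such that |∂²f/∂x²(x,y)| ≥ C x^{α−2} for all (x,y) with 0 < x < μ and |y − ψ(x) − r x^M| < ν x^M. -/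
open MeasureTheory Set Filter Topology

noncomputable section

/-- The space of smooth real-valued functions on the plane. -/
def smoothFn : Submodule ℝ (ℝ × ℝ → ℝ) where
  carrier := {G | ContDiff ℝ (⊤ : ℕ∞) G}
  add_mem' hG hH := by
    rw [mem_ofPred_eq] at *
    exact hG.add hH
  zero_mem' := by
    rw [mem_ofPred_eq]
    exact contDiff_const
  smul_mem' c G hG := by
    rw [mem_ofPred_eq] at *
    exact contDiff_const.smul hG

lemma smoothFn_contDiff (G : smoothFn) : ContDiff ℝ (⊤ : ℕ∞) G.1 := G.2

lemma smoothFn_differentiable (G : smoothFn) : Differentiable ℝ G.1 :=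
  (smoothFn_contDiff G).differentiable (by simp)

/-- The directional derivative along `v`, as an endomorphism of the smooth functions. -/
def dirDeriv (v : ℝ × ℝ) : Module.End ℝ smoothFn where
  toFun G := ⟨fun p => fderiv ℝ G.1 p v,
    ((smoothFn_contDiff G).fderiv_right (m := (⊤ : ℕ∞)) (by simp)).clm_apply contDiff_const⟩
  map_add' G H := by
    ext p
    simp [fderiv_add (smoothFn_differentiable G p) (smoothFn_differentiable H p)]
  map_smul' c G := by
    ext p
    simp [fderiv_const_smul (smoothFn_differentiable G p) c]

lemma dirDeriv_apply (v : ℝ × ℝ) (G : smoothFn) (p : ℝ × ℝ) :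
    (dirDeriv v G).1 p = fderiv ℝ G.1 p v := rfl

lemma dirDeriv_commute (v w : ℝ × ℝ) : Commute (dirDeriv v) (dirDeriv w) := by
  ext G p
  have hd : DifferentiableAt ℝ (fderiv ℝ G.1) p :=
    ((smoothFn_contDiff G).fderiv_right (m := (⊤ : ℕ∞)) (by simp)).differentiable (by simp) p
  have key : ∀ u u' : ℝ × ℝ, (dirDeriv u (dirDeriv u' G)).1 p = fderiv ℝ (fderiv ℝ G.1) p u u' := by
    intro u u'
    rw [dirDeriv_apply]
    change fderiv ℝ (fun q => fderiv ℝ G.1 q u') p u = _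
    rw [fderiv_clm_apply hd (differentiableAt_const u')]
    simp
  have hs : IsSymmSndFDerivAt ℝ G.1 p :=
    (smoothFn_contDiff G).contDiffAt.isSymmSndFDerivAt (by
      rw [minSmoothness_of_isRCLikeNormedField]
      exact ENat.LEInfty.out)
  change (dirDeriv v (dirDeriv w G)).1 p = (dirDeriv w (dirDeriv v G)).1 p
  rw [key, key, hs v w]

/-- The partial derivative in the first variable. -/
abbrev dX : Module.End ℝ smoothFn := dirDeriv (1, 0)

/-- The partial derivative in the second variable. -/
abbrev dY : Module.End ℝ smoothFn := dirDeriv (0, 1)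

lemma fderiv_eq_partials (G : smoothFn) (p v : ℝ × ℝ) :
    fderiv ℝ G.1 p v = v.1 * (dX G).1 p + v.2 * (dY G).1 p := by
  have : v = v.1 • ((1 : ℝ), (0 : ℝ)) + v.2 • ((0 : ℝ), (1 : ℝ)) := by ext <;> simp
  conv_lhs => rw [this]
  rw [map_add, map_smul, map_smul]
  rfl

lemma hasDerivAt_comp_curve (G : smoothFn) {u v : ℝ → ℝ} {u' v' t : ℝ}
    (hu : HasDerivAt u u' t) (hv : HasDerivAt v v' t) :
    HasDerivAt (fun s => G.1 (u s, v s))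
      (u' * (dX G).1 (u t, v t) + v' * (dY G).1 (u t, v t)) t := by
  have := (smoothFn_differentiable G (u t, v t)).hasFDerivAt.comp_hasDerivAt t (hu.prodMk hv)
  rwa [fderiv_eq_partials] at this

lemma iteratedDeriv_fst (G : smoothFn) (n : ℕ) (y : ℝ) :
    iteratedDeriv n (fun x => G.1 (x, y)) = fun x => ((dX ^ n) G).1 (x, y) := by
  induction n generalizing G with
  | zero => rw [iteratedDeriv_zero]; rfl
  | succ n ih =>
    rw [iteratedDeriv_succ', pow_succ,
      show deriv (fun x => G.1 (x, y)) = fun x => (dX G).1 (x, y) from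
      funext fun x => by
        simpa using (hasDerivAt_comp_curve G (hasDerivAt_id x) (hasDerivAt_const x y)).deriv, ih]
    rfl

lemma iteratedDeriv_snd (G : smoothFn) (n : ℕ) (x : ℝ) :
    iteratedDeriv n (fun y => G.1 (x, y)) = fun y => ((dY ^ n) G).1 (x, y) := by
  induction n generalizing G with
  | zero => rw [iteratedDeriv_zero]; rfl
  | succ n ih =>
    rw [iteratedDeriv_succ', pow_succ,
      show deriv (fun y => G.1 (x, y)) = fun y => (dY G).1 (x, y) from
      funext fun y => by
        simpa using (hasDerivAt_comp_curve G (hasDerivAt_const y x) (hasDerivAt_id y)).deriv, ih]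
    rfl

lemma pderiv2_smoothFn (G : smoothFn) (a b : ℕ) (x y : ℝ) :
    pderiv2 (fun x y => G.1 (x, y)) a b x y = ((dX ^ a * dY ^ b) G).1 (x, y) := by
  simp only [pderiv2, iteratedDeriv_snd, iteratedDeriv_fst]
  rfl

lemma pderiv2_congr {f g : ℝ → ℝ → ℝ} {x y : ℝ}
    (h : (fun p : ℝ × ℝ => f p.1 p.2) =ᶠ[𝓝 (x, y)] fun p => g p.1 p.2) (a b : ℕ) :
    pderiv2 f a b x y = pderiv2 g a b x y := by
  rw [EventuallyEq, nhds_prod_eq] at h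
  refine Filter.EventuallyEq.iteratedDeriv_eq a ?_
  filter_upwards [h.curry] with x' hx'
  exact Filter.EventuallyEq.iteratedDeriv_eq b hx'

/-- A smooth function whose derivatives of order less than `N` vanish at the origin is
`O(‖p‖ ^ N)` there. -/
lemma exists_bound_of_vanishing (N : ℕ) (E : smoothFn)
    (h : ∀ a b, a + b < N → ((dX ^ a * dY ^ b) E).1 0 = 0) :
    ∃ C, 0 ≤ C ∧ ∀ p : ℝ × ℝ, ‖p‖ ≤ 1 → |E.1 p| ≤ C * ‖p‖ ^ N := by
  induction N generalizing E with
  | zero =>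
    obtain ⟨C, hC⟩ := (isCompact_closedBall (0 : ℝ × ℝ) 1).exists_bound_of_continuousOn
      (smoothFn_contDiff E).continuous.continuousOn
    refine ⟨|C|, abs_nonneg _, fun p hp => ?_⟩
    simpa using (hC p (by simpa using hp)).trans (le_abs_self C)
  | succ N ih =>
    obtain ⟨C₁, hC₁, h₁⟩ := ih (dX E) fun a b hab => by
      rw [← h (a + 1) b (by omega), pow_succ, mul_assoc,
        ((dirDeriv_commute _ _).pow_right b).eq, ← mul_assoc]
      rfl
    obtain ⟨C₂, hC₂, h₂⟩ := ih (dY E) fun a b hab => by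
      rw [← h a (b + 1) (by omega), pow_succ, ← mul_assoc]
      rfl
    refine ⟨C₁ + C₂, by positivity, fun p hp => ?_⟩
    have h0 : E.1 0 = 0 := by simpa using h 0 0 (by omega)
    have := (convex_closedBall (0 : ℝ × ℝ) ‖p‖).norm_image_sub_le_of_norm_fderiv_le
      (f := E.1) (C := (C₁ + C₂) * ‖p‖ ^ N) (x := 0) (y := p) (𝕜 := ℝ)
      (fun q _ => smoothFn_differentiable E q) (fun q hq => ?_) (by simp) (by simp)
    · simpa [h0, pow_succ, mul_assoc] using this
    · have hq' : ‖q‖ ≤ ‖p‖ := by simpa using hq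
      refine ContinuousLinearMap.opNorm_le_bound _ (by positivity) fun v => ?_
      rw [fderiv_eq_partials, Real.norm_eq_abs]
      have e₁ := h₁ q (hq'.trans hp)
      have e₂ := h₂ q (hq'.trans hp)
      have v₁ : |v.1| ≤ ‖v‖ := norm_fst_le v
      have v₂ : |v.2| ≤ ‖v‖ := norm_snd_le v
      calc |v.1 * (dX E).1 q + v.2 * (dY E).1 q|
          ≤ |v.1| * |(dX E).1 q| + |v.2| * |(dY E).1 q| := by
            rw [← abs_mul, ← abs_mul]; exact abs_add_le _ _
        _ ≤ ‖v‖ * (C₁ * ‖q‖ ^ N) + ‖v‖ * (C₂ * ‖q‖ ^ N) := by gcongr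
        _ = (C₁ + C₂) * ‖q‖ ^ N * ‖v‖ := by ring
        _ ≤ (C₁ + C₂) * ‖p‖ ^ N * ‖v‖ := by gcongr

/-- The monomial `x ^ i * y ^ j`. -/
def monoXY (i j : ℕ) : smoothFn :=
  ⟨fun p => p.1 ^ i * p.2 ^ j,
    show ContDiff ℝ (⊤ : ℕ∞) _ from (contDiff_fst.pow i).mul (contDiff_snd.pow j)⟩

lemma dX_monoXY (i j : ℕ) : dX (monoXY i j) = (i : ℝ) • monoXY (i - 1) j := by
  ext ⟨x, y⟩
  have h := hasDerivAt_comp_curve (monoXY i j) (hasDerivAt_id x) (hasDerivAt_const x y)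
  have h' : HasDerivAt (fun s => s ^ i * y ^ j) (i * x ^ (i - 1) * y ^ j) x :=
    (hasDerivAt_pow i x).mul_const _
  simpa [monoXY, mul_assoc] using h.unique h'

lemma dY_monoXY (i j : ℕ) : dY (monoXY i j) = (j : ℝ) • monoXY i (j - 1) := by
  ext ⟨x, y⟩
  have h := hasDerivAt_comp_curve (monoXY i j) (hasDerivAt_const y x) (hasDerivAt_id y)
  have h' : HasDerivAt (fun s => x ^ i * s ^ j) (x ^ i * (j * y ^ (j - 1))) y :=
    (hasDerivAt_pow j y).const_mul _
  simpa [monoXY, mul_left_comm] using h.unique h'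

lemma dX_pow_monoXY (a i j : ℕ) :
    (dX ^ a) (monoXY i j) = (i.descFactorial a : ℝ) • monoXY (i - a) j := by
  induction a with
  | zero => simp
  | succ a ih =>
    rw [pow_succ', Module.End.mul_apply, ih, map_smul, dX_monoXY, smul_smul, Nat.sub_sub,
      Nat.descFactorial_succ]
    push_cast
    rw [mul_comm]

lemma dY_pow_monoXY (b i j : ℕ) :
    (dY ^ b) (monoXY i j) = (j.descFactorial b : ℝ) • monoXY i (j - b) := by
  induction b with
  | zero => simp
  | succ b ih =>
    rw [pow_succ', Module.End.mul_apply, ih, map_smul, dY_monoXY, smul_smul, Nat.sub_sub,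
      Nat.descFactorial_succ]
    push_cast
    rw [mul_comm]

lemma partials_monoXY_zero (a b i j : ℕ) :
    ((dX ^ a * dY ^ b) (monoXY i j)).1 0 =
      if (i, j) = (a, b) then (a.factorial * b.factorial : ℝ) else 0 := by
  have h : ∀ m n : ℕ, (m.descFactorial n : ℝ) * 0 ^ (m - n) =
      if m = n then (n.factorial : ℝ) else 0 := by
    intro m n
    rcases lt_trichotomy m n with hmn | rfl | hmn
    · simp [Nat.descFactorial_eq_zero_iff_lt.2 hmn, hmn.ne]
    · simp [Nat.descFactorial_self]
    · simp [hmn.ne', (Nat.sub_pos_of_lt hmn).ne']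
  rw [Module.End.mul_apply, dY_pow_monoXY, map_smul, dX_pow_monoXY]
  have e : ((j.descFactorial b : ℝ) • (i.descFactorial a : ℝ) • monoXY (i - a) (j - b)).1 0 =
      ((i.descFactorial a : ℝ) * 0 ^ (i - a)) * ((j.descFactorial b : ℝ) * 0 ^ (j - b)) := by
    simp only [monoXY, Submodule.coe_smul, Pi.smul_apply, smul_eq_mul, Prod.fst_zero, Prod.snd_zero]
    ring
  rw [e, h, h]
  by_cases hi : i = a <;> by_cases hj : j = b <;> simp [hi, hj]

/-- The Taylor polynomial of `G` at the origin with exponents less than `N` in each variable. -/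
def taylorXY (G : smoothFn) (N : ℕ) : smoothFn :=
  ∑ p ∈ Finset.range N ×ˢ Finset.range N,
    tcoeff (fun x y => G.1 (x, y)) p.1 p.2 • monoXY p.1 p.2

lemma partials_sub_taylorXY (G : smoothFn) {N a b : ℕ} (ha : a < N) (hb : b < N) :
    ((dX ^ a * dY ^ b) (G - taylorXY G N)).1 0 = 0 := by
  have hsum : ((dX ^ a * dY ^ b) (taylorXY G N)).1 0 = ((dX ^ a * dY ^ b) G).1 0 := by
    rw [taylorXY, map_sum, Submodule.coe_sum, Finset.sum_apply, Finset.sum_eq_single (a, b)]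
    · simp only [map_smul, Submodule.coe_smul, Pi.smul_apply, partials_monoXY_zero, smul_eq_mul,
        if_true, tcoeff, pderiv2_smoothFn]
      rw [div_mul_cancel₀ _ (by positivity)]
      rfl
    · intro p _ hp
      rw [map_smul, Submodule.coe_smul, Pi.smul_apply, partials_monoXY_zero, if_neg hp, smul_zero]
    · simp [ha, hb]
  rw [map_sub, Submodule.coe_sub, Pi.sub_apply, hsum, sub_self]

lemma partials_taylorXY (G : smoothFn) (N i j : ℕ) (p : ℝ × ℝ) :
    p.1 ^ i * p.2 ^ j * ((dX ^ i * dY ^ j) (taylorXY G N)).1 p =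
      ∑ q ∈ Finset.range N ×ˢ Finset.range N,
        (tcoeff (fun x y => G.1 (x, y)) q.1 q.2 *
          (q.1.descFactorial i * q.2.descFactorial j)) * (p.1 ^ q.1 * p.2 ^ q.2) := by
  have h : ∀ (m n : ℕ) (s : ℝ),
      s ^ n * ((m.descFactorial n : ℝ) * s ^ (m - n)) = m.descFactorial n * s ^ m := by
    intro m n s
    rcases lt_or_ge m n with hmn | hmn
    · simp [Nat.descFactorial_eq_zero_iff_lt.2 hmn]
    · rw [mul_left_comm, ← pow_add, Nat.add_sub_cancel' hmn]
  rw [taylorXY, map_sum, Submodule.coe_sum, Finset.sum_apply, Finset.mul_sum]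
  refine Finset.sum_congr rfl fun q _ => ?_
  rw [Module.End.mul_apply, map_smul, dY_pow_monoXY, map_smul, map_smul, dX_pow_monoXY]
  simp only [monoXY, Submodule.coe_smul, Pi.smul_apply, smul_eq_mul]
  linear_combination tcoeff (fun x y => G.1 (x, y)) q.1 q.2 *
    (p.2 ^ j * (q.2.descFactorial j * p.2 ^ (q.2 - j)) * h q.1 i p.1 +
      q.1.descFactorial i * p.1 ^ q.1 * h q.2 j p.2)

lemma tendsto_fst_rpow_nhdsGT {r e : ℝ} (he : 0 ≤ e) :
    Tendsto (fun z : ℝ × ℝ => z.1 ^ e) (𝓝[>] 0 ×ˢ 𝓝 r) (𝓝 (if e = 0 then 1 else 0)) := by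
  split_ifs with h
  · simp [h]
  · have := (Real.continuousAt_rpow_const (0 : ℝ) e (Or.inr he)).tendsto
    rw [Real.zero_rpow h] at this
    exact (this.mono_left nhdsWithin_le_nhds).comp tendsto_fst

lemma eventually_fst_pos (r : ℝ) : ∀ᶠ z : ℝ × ℝ in 𝓝[>] 0 ×ˢ 𝓝 r, 0 < z.1 :=
  tendsto_fst.eventually self_mem_nhdsWithin

/-- On the curves `y = t * x ^ M`, a polynomial is asymptotic to its part of lowest weight. -/
lemma tendsto_weighted_sum (s : Finset (ℕ × ℕ)) (w : ℕ × ℕ → ℝ) (M α r : ℝ)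
    (hw : ∀ p ∈ s, w p ≠ 0 → α ≤ p.1 + M * p.2) :
    Tendsto (fun z : ℝ × ℝ => (∑ p ∈ s, w p * (z.1 ^ p.1 * (z.2 * z.1 ^ M) ^ p.2)) / z.1 ^ α)
      (𝓝[>] 0 ×ˢ 𝓝 r)
      (𝓝 (∑ p ∈ s, (if (p.1 : ℝ) + M * p.2 = α then w p else 0) * r ^ p.2)) := by
  simp_rw [Finset.sum_div]
  refine tendsto_finsetSum _ fun p hp => ?_
  by_cases h0 : w p = 0
  · simp [h0]
  have hlim := ((tendsto_snd (f := 𝓝[>] (0 : ℝ)) (g := 𝓝 r)).pow p.2).const_mul (w p)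
  have hlim' := hlim.mul (tendsto_fst_rpow_nhdsGT (r := r) (sub_nonneg.2 (hw p hp h0)))
  have e : (if (p.1 : ℝ) + M * p.2 = α then w p else 0) * r ^ p.2 =
      w p * r ^ p.2 * (if (p.1 : ℝ) + M * p.2 - α = 0 then 1 else 0) := by
    simp only [sub_eq_zero]
    split_ifs <;> simp
  rw [e]
  refine hlim'.congr' ?_
  filter_upwards [eventually_fst_pos r] with z hz
  rw [Real.rpow_sub hz, Real.rpow_add hz, Real.rpow_mul hz.le, Real.rpow_natCast,
    Real.rpow_natCast, mul_pow]
  ring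

/-- On the curves `y = t * x ^ M`, the expression `x ^ i * y ^ j * ∂ₓⁱ ∂ᵧʲ G` is asymptotic to
the corresponding expression for the part of `G` of lowest weight. -/
lemma tendsto_partials (G : smoothFn) {M α : ℝ} (hM : 1 ≤ M) (r : ℝ)
    (hα : ∀ a b, tcoeff (fun x y => G.1 (x, y)) a b ≠ 0 → α ≤ a + M * b)
    {N i j : ℕ} (hN : α < N) (hij : i + j ≤ N) :
    Tendsto (fun z : ℝ × ℝ => z.1 ^ i * (z.2 * z.1 ^ M) ^ j *
        ((dX ^ i * dY ^ j) G).1 (z.1, z.2 * z.1 ^ M) / z.1 ^ α) (𝓝[>] 0 ×ˢ 𝓝 r)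
      (𝓝 (∑ p ∈ Finset.range N ×ˢ Finset.range N,
        (if (p.1 : ℝ) + M * p.2 = α then tcoeff (fun x y => G.1 (x, y)) p.1 p.2 *
          (p.1.descFactorial i * p.2.descFactorial j) else 0) * r ^ p.2)) := by
  have hT := tendsto_weighted_sum (Finset.range N ×ˢ Finset.range N)
    (fun p => tcoeff (fun x y => G.1 (x, y)) p.1 p.2 *
      (p.1.descFactorial i * p.2.descFactorial j)) M α r
    fun p _ hp => hα _ _ (left_ne_zero_of_mul hp)
  obtain ⟨C, hC, hE⟩ := exists_bound_of_vanishing (N - (i + j))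
    ((dX ^ i * dY ^ j) (G - taylorXY G N)) fun a b hab => by
      rw [← partials_sub_taylorXY G (N := N) (a := a + i) (b := b + j) (by omega) (by omega),
        ← Module.End.mul_apply, pow_add, pow_add,
        ((dirDeriv_commute (0, 1) (1, 0)).pow_pow b i).mul_mul_mul_comm]
  set K : ℝ := |r| + 1 with hK
  have hK1 : 1 ≤ K := by rw [hK]; linarith [abs_nonneg r]
  have hR : Tendsto (fun z : ℝ × ℝ => z.1 ^ i * (z.2 * z.1 ^ M) ^ j *
      ((dX ^ i * dY ^ j) (G - taylorXY G N)).1 (z.1, z.2 * z.1 ^ M) / z.1 ^ α)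
      (𝓝[>] 0 ×ˢ 𝓝 r) (𝓝 0) := by
    have hb : Tendsto (fun z : ℝ × ℝ => C * K ^ N * z.1 ^ ((N : ℝ) - α))
        (𝓝[>] 0 ×ˢ 𝓝 r) (𝓝 0) := by
      have := (tendsto_fst_rpow_nhdsGT (r := r) (sub_nonneg.2 hN.le)).const_mul (C * K ^ N)
      rwa [if_neg (sub_pos.2 hN).ne', mul_zero] at this
    refine squeeze_zero_norm' ?_ hb
    have hx : ∀ᶠ z : ℝ × ℝ in 𝓝[>] 0 ×ˢ 𝓝 r, z.1 < K⁻¹ :=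
      tendsto_fst.eventually (nhdsWithin_le_nhds (Iio_mem_nhds (by positivity)))
    have ht : ∀ᶠ z : ℝ × ℝ in 𝓝[>] 0 ×ˢ 𝓝 r, |z.2| < K :=
      tendsto_snd.eventually (continuous_abs.continuousAt.eventually_lt_const (by simp [hK]))
    filter_upwards [eventually_fst_pos r, hx, ht] with z hz hzK hzt
    have hz1 : z.1 ≤ 1 := hzK.le.trans (inv_le_one_of_one_le₀ hK1)
    have hy : |z.2 * z.1 ^ M| ≤ K * z.1 := by
      rw [abs_mul, abs_of_pos (Real.rpow_pos_of_pos hz M)]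
      have : z.1 ^ M ≤ z.1 := by
        simpa using Real.rpow_le_rpow_of_exponent_ge hz hz1 hM
      gcongr
    have hxK : |z.1| ≤ K * z.1 := by
      rw [abs_of_pos hz]
      exact le_mul_of_one_le_left hz.le hK1
    have hnorm : ‖(z.1, z.2 * z.1 ^ M)‖ ≤ K * z.1 := by
      rw [Prod.norm_def]
      exact max_le hxK hy
    have hK1' : K * z.1 ≤ 1 := by
      have := mul_le_mul_of_nonneg_left hzK.le (zero_le_one.trans hK1)
      rwa [mul_inv_cancel₀ (by positivity)] at this
    have hEz := hE _ (hnorm.trans hK1')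
    rw [Real.norm_eq_abs, abs_div, abs_mul, abs_mul, abs_pow, abs_pow,
      abs_of_pos (Real.rpow_pos_of_pos hz α), Real.rpow_sub hz, Real.rpow_natCast, ← mul_div_assoc]
    refine div_le_div_of_nonneg_right ?_ (Real.rpow_pos_of_pos hz α).le
    calc |z.1| ^ i * |z.2 * z.1 ^ M| ^ j *
          |((dX ^ i * dY ^ j) (G - taylorXY G N)).1 (z.1, z.2 * z.1 ^ M)|
        ≤ (K * z.1) ^ i * (K * z.1) ^ j * (C * (K * z.1) ^ (N - (i + j))) := by
          gcongr
          exact hEz.trans (by gcongr)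
      _ = C * (K * z.1) ^ (i + j + (N - (i + j))) := by ring
      _ = C * K ^ N * z.1 ^ N := by rw [Nat.add_sub_cancel' hij, mul_pow, mul_assoc]
  have := hT.add hR
  rw [add_zero] at this
  refine this.congr fun z => ?_
  rw [← partials_taylorXY G N i j (z.1, z.2 * z.1 ^ M), ← add_div, ← mul_add, map_sub,
    Submodule.coe_sub, Pi.sub_apply, add_sub_cancel]

/-- A smooth function of one variable whose derivatives of order less than `n` vanish at `0`
is `O(x ^ n)` there. -/
lemma exists_bound_of_iteratedDeriv_eq_zero {φ : ℝ → ℝ} (hφ : ContDiff ℝ (⊤ : ℕ∞) φ) (n : ℕ)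
    (h : ∀ k < n, iteratedDeriv k φ 0 = 0) :
    ∃ C, ∀ x ∈ Icc (0 : ℝ) 1, |φ x| ≤ C * x ^ n := by
  cases n with
  | zero =>
    obtain ⟨C, hC⟩ := (isCompact_Icc (a := (0 : ℝ)) (b := 1)).exists_bound_of_continuousOn
      hφ.continuous.continuousOn
    exact ⟨C, fun x hx => by simpa using hC x hx⟩
  | succ n =>
    obtain ⟨C, hC⟩ := exists_taylor_mean_remainder_bound (n := n) zero_le_one
      (hφ.of_le (by exact mod_cast le_top)).contDiffOn
    refine ⟨C, fun x hx => ?_⟩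
    have h0 : taylorWithinEval φ n (Icc 0 1) 0 x = 0 := by
      rw [taylor_within_apply]
      refine Finset.sum_eq_zero fun k hk => ?_
      rw [iteratedDerivWithin_eq_iteratedDeriv (uniqueDiffOn_Icc one_pos)
        (hφ.of_le (by exact mod_cast le_top)).contDiffAt (by simp), h k (by simpa using hk),
        smul_zero]
    simpa [h0] using hC x hx

lemma dX_sq_shear (g G : smoothFn) {ψ : ℝ → ℝ} (hψ : ContDiff ℝ (⊤ : ℕ∞) ψ)
    (h : ∀ x y, g.1 (x, y) = G.1 (x, y - ψ x)) (x y : ℝ) :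
    ((dX ^ 2) g).1 (x, y) = ((dX ^ 2 * dY ^ 0) G).1 (x, y - ψ x)
      - 2 * deriv ψ x * ((dX ^ 1 * dY ^ 1) G).1 (x, y - ψ x)
      + deriv ψ x ^ 2 * ((dX ^ 0 * dY ^ 2) G).1 (x, y - ψ x)
      - deriv (deriv ψ) x * ((dX ^ 0 * dY ^ 1) G).1 (x, y - ψ x) := by
  have hψ1 : ∀ x, HasDerivAt ψ (deriv ψ x) x := fun x =>
    (hψ.differentiable (by simp) x).hasDerivAt
  have hψ2 : HasDerivAt (deriv ψ) (deriv (deriv ψ) x) x :=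
    ((hψ.iterate_deriv 1).differentiable (by simp) x).hasDerivAt
  have hc : ∀ (H : smoothFn) (x y : ℝ), HasDerivAt (fun s => H.1 (s, y - ψ s))
      ((dX H).1 (x, y - ψ x) - deriv ψ x * (dY H).1 (x, y - ψ x)) x := by
    intro H x y
    convert hasDerivAt_comp_curve H (hasDerivAt_id' x) ((hψ1 x).const_sub y) using 1
    ring
  have hs : ∀ (H : smoothFn) (x y : ℝ), HasDerivAt (fun s => H.1 (s, y)) ((dX H).1 (x, y)) x := by
    intro H x y
    simpa using hasDerivAt_comp_curve H (hasDerivAt_id x) (hasDerivAt_const x y)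
  have h1 : ∀ x y, (dX g).1 (x, y) =
      (dX G).1 (x, y - ψ x) - deriv ψ x * (dY G).1 (x, y - ψ x) := by
    intro x y
    refine (hs g x y).unique ?_
    simp_rw [h]
    exact hc G x y
  have h2 := hs (dX g) x y
  simp_rw [h1] at h2
  have h3 := h2.unique ((hc (dX G) x y).sub (hψ2.mul (hc (dY G) x y)))
  have hcomm : dY (dX G) = dX (dY G) := LinearMap.congr_fun (dirDeriv_commute (0, 1) (1, 0)).eq G
  rw [hcomm] at h3
  simp only [pow_two, pow_zero, pow_one, mul_one, one_mul, Module.End.mul_apply]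
  rw [h3]
  ring

/-- Every function that is smooth near the origin agrees there with a smooth function on the
whole plane. -/
lemma exists_smoothFn_eventuallyEq {f : ℝ × ℝ → ℝ} {U : Set (ℝ × ℝ)} (hU : U ∈ 𝓝 0)
    (hf : ContDiffOn ℝ (⊤ : ℕ∞) f U) : ∃ g : smoothFn, f =ᶠ[𝓝 0] g.1 := by
  obtain ⟨R, hR, hRU⟩ := Metric.nhds_basis_ball.mem_iff.1 hU
  let χ : ContDiffBump (0 : ℝ × ℝ) := ⟨R / 3, R / 2, by positivity, by linarith⟩
  refine ⟨⟨fun p => χ p * f p, show ContDiff ℝ (⊤ : ℕ∞) _ from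
    contDiff_iff_contDiffAt.2 fun p => ?_⟩, ?_⟩
  · by_cases hp : p ∈ Metric.ball (0 : ℝ × ℝ) R
    · exact χ.contDiffAt.mul (hf.contDiffAt (mem_of_superset (Metric.isOpen_ball.mem_nhds hp) hRU))
    · have : (fun p => χ p * f p) =ᶠ[𝓝 p] fun _ => 0 := by
        have hp' : p ∈ (tsupport χ)ᶜ := by
          rw [χ.tsupport_eq]
          intro hc
          exact hp (Metric.closedBall_subset_ball (by change R / 2 < R; linarith) hc)
        filter_upwards [(isClosed_tsupport χ).isOpen_compl.mem_nhds hp'] with q hq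
        rw [image_eq_zero_of_notMem_tsupport hq, zero_mul]
      exact contDiffAt_const.congr_of_eventuallyEq this
  · filter_upwards [χ.eventuallyEq_one] with p hp
    simp [hp]

lemma tcoeff_congr {f g : ℝ → ℝ → ℝ}
    (h : (fun p : ℝ × ℝ => f p.1 p.2) =ᶠ[𝓝 0] fun p => g p.1 p.2) : tcoeff f = tcoeff g := by
  ext a b
  rw [tcoeff, tcoeff, pderiv2_congr h]

lemma alphaM_le {R : ℝ → ℝ → ℝ} {M : ℝ} (hM : 0 ≤ M) {a b : ℕ} (h : tcoeff R a b ≠ 0) :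
    alphaM R M ≤ a + M * b :=
  csInf_le ⟨0, by rintro _ ⟨p, -, rfl⟩; positivity⟩ ⟨(a, b), h, rfl⟩

lemma exists_of_RMpart_ne_zero {R : ℝ → ℝ → ℝ} {M x y : ℝ} (h : RMpart R M x y ≠ 0) :
    ∃ a b : ℕ, tcoeff R a b ≠ 0 ∧ (a : ℝ) + M * b = alphaM R M := by
  by_contra! hc
  refine h ((tsum_congr fun p => ?_).trans tsum_zero)
  exact indicator_of_notMem (fun hp => hc p.1 p.2 hp.1 hp.2) _

lemma RMpart_one_eq_sum {R : ℝ → ℝ → ℝ} {M : ℝ} (hM : 1 ≤ M) {N : ℕ} (hN : alphaM R M < N)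
    (y : ℝ) :
    RMpart R M 1 y = ∑ p ∈ Finset.range N ×ˢ Finset.range N,
      (if (p.1 : ℝ) + M * p.2 = alphaM R M then tcoeff R p.1 p.2 else 0) * y ^ p.2 := by
  rw [RMpart, tsum_eq_sum (s := Finset.range N ×ˢ Finset.range N)]
  · refine Finset.sum_congr rfl fun p _ => ?_
    by_cases h0 : tcoeff R p.1 p.2 = 0 <;> simp [indicator, tsupp, h0]
  · intro p hp
    refine indicator_of_notMem (fun h => hp ?_) _
    have h1 : (p.1 : ℝ) + M * p.2 < N := h.2 ▸ hN
    have h2 : (p.2 : ℝ) ≤ M * p.2 := le_mul_of_one_le_left (by positivity) hM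
    have h3 : (0 : ℝ) ≤ p.1 := by positivity
    have h4 : (0 : ℝ) ≤ p.2 := by positivity
    simp only [Finset.mem_product, Finset.mem_range]
    constructor
    · exact_mod_cast (by linarith : (p.1 : ℝ) < N)
    · exact_mod_cast (by linarith : (p.2 : ℝ) < N)

lemma deriv_sum_mul_pow (s : Finset (ℕ × ℕ)) (k : ℕ × ℕ → ℝ) :
    deriv (fun y : ℝ => ∑ p ∈ s, k p * y ^ p.2) =
      fun y => ∑ p ∈ s, k p * (p.2 * y ^ (p.2 - 1)) :=
  funext fun y => (HasDerivAt.fun_sum fun p _ => (hasDerivAt_pow p.2 y).const_mul (k p)).deriv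

lemma iteratedDeriv_two_sum_mul_pow (s : Finset (ℕ × ℕ)) (k : ℕ × ℕ → ℝ) :
    iteratedDeriv 2 (fun y : ℝ => ∑ p ∈ s, k p * y ^ p.2) =
      fun y => ∑ p ∈ s, k p * (p.2 * ((p.2 - 1 : ℕ) * y ^ (p.2 - 1 - 1))) := by
  rw [iteratedDeriv_succ, iteratedDeriv_one, deriv_sum_mul_pow]
  exact funext fun y => (HasDerivAt.fun_sum fun p _ =>
    ((hasDerivAt_pow (p.2 - 1) y).const_mul (p.2 : ℝ)).const_mul (k p)).deriv

/-- At a point where the first two derivatives of `∑ k p * y ^ p.2` vanish, a weight that is a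
quadratic polynomial in `p.2` may be replaced by its value at `p.2 = 0`. -/
lemma sum_mul_quadratic_eq (s : Finset (ℕ × ℕ)) (k e : ℕ × ℕ → ℝ) (r A B D : ℝ)
    (h1 : deriv (fun y : ℝ => ∑ p ∈ s, k p * y ^ p.2) r = 0)
    (h2 : iteratedDeriv 2 (fun y : ℝ => ∑ p ∈ s, k p * y ^ p.2) r = 0)
    (he : ∀ p, k p ≠ 0 → e p = A + B * p.2 + D * (p.2 * (p.2 - 1))) :
    ∑ p ∈ s, k p * e p * r ^ p.2 = A * ∑ p ∈ s, k p * r ^ p.2 := by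
  simp only [deriv_sum_mul_pow] at h1
  simp only [iteratedDeriv_two_sum_mul_pow] at h2
  have : ∑ p ∈ s, k p * e p * r ^ p.2 = A * ∑ p ∈ s, k p * r ^ p.2 +
      B * r * ∑ p ∈ s, k p * (p.2 * r ^ (p.2 - 1)) +
      D * r ^ 2 * ∑ p ∈ s, k p * (p.2 * ((p.2 - 1 : ℕ) * r ^ (p.2 - 1 - 1))) := by
    rw [Finset.mul_sum, Finset.mul_sum, Finset.mul_sum, ← Finset.sum_add_distrib,
      ← Finset.sum_add_distrib]
    refine Finset.sum_congr rfl fun p _ => ?_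
    by_cases hk : k p = 0
    · simp [hk]
    rw [he p hk]
    rcases p with ⟨a, _ | _ | b⟩ <;> push_cast <;> simp <;> ring
  rw [this, h1, h2, mul_zero, mul_zero, add_zero, add_zero]

lemma isBigO_derivs_div {ψ : ℝ → ℝ} (hψ : ContDiff ℝ (⊤ : ℕ∞) ψ) {M r : ℝ} (hr : r ≠ 0)
    (hψ0 : ∀ j : ℕ, (j : ℝ) < M → iteratedDeriv j ψ 0 = 0) (i : ℕ) :
    (fun z : ℝ × ℝ => z.1 ^ i * iteratedDeriv i ψ z.1 / (z.2 * z.1 ^ M))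
      =O[𝓝[>] 0 ×ˢ 𝓝 r] fun _ => (1 : ℝ) := by
  obtain ⟨C, hC⟩ := exists_bound_of_iteratedDeriv_eq_zero
    (φ := iteratedDeriv i ψ) (by rw [iteratedDeriv_eq_iterate]; exact hψ.iterate_deriv i)
    (⌈M⌉₊ - i) fun k hk => by
      have := hψ0 (k + i) (Nat.lt_ceil.1 (by omega))
      rwa [iteratedDeriv_eq_iterate, Function.iterate_add_apply, ← iteratedDeriv_eq_iterate,
        ← iteratedDeriv_eq_iterate] at this
  refine Asymptotics.IsBigO.of_bound (|C| / (|r| / 2)) ?_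
  have hx : ∀ᶠ z : ℝ × ℝ in 𝓝[>] 0 ×ˢ 𝓝 r, z.1 < 1 :=
    tendsto_fst.eventually (nhdsWithin_le_nhds (Iio_mem_nhds one_pos))
  have hr' : 0 < |r| := abs_pos.2 hr
  have ht : ∀ᶠ z : ℝ × ℝ in 𝓝[>] 0 ×ˢ 𝓝 r, |r| / 2 < |z.2| :=
    tendsto_snd.eventually (continuous_abs.continuousAt.eventually_const_lt (by linarith))
  filter_upwards [eventually_fst_pos r, hx, ht] with z hz hz1 hzt
  have hzM := Real.rpow_pos_of_pos hz M
  have hb := hC z.1 ⟨hz.le, hz1.le⟩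
  have hpow : z.1 ^ i * z.1 ^ (⌈M⌉₊ - i) ≤ z.1 ^ M := by
    rw [← pow_add, ← Real.rpow_natCast]
    refine Real.rpow_le_rpow_of_exponent_ge hz hz1.le ((Nat.le_ceil M).trans ?_)
    exact_mod_cast (by omega : ⌈M⌉₊ ≤ i + (⌈M⌉₊ - i))
  rw [norm_one, mul_one, Real.norm_eq_abs, abs_div, abs_mul, abs_mul, abs_pow, abs_of_pos hz,
    abs_of_pos hzM, div_le_div_iff₀ (mul_pos ((half_pos hr').trans hzt) hzM) (by positivity)]
  calc z.1 ^ i * |iteratedDeriv i ψ z.1| * (|r| / 2)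
      ≤ z.1 ^ i * (|C| * z.1 ^ (⌈M⌉₊ - i)) * |z.2| := by
        gcongr
        exact hb.trans (by gcongr; exact le_abs_self C)
    _ = |C| * (z.1 ^ i * z.1 ^ (⌈M⌉₊ - i)) * |z.2| := by ring
    _ ≤ |C| * z.1 ^ M * |z.2| := by gcongr
    _ = |C| * (|z.2| * z.1 ^ M) := by ring

/-- On the curves `y = ψ x + t * x ^ M` with `t` near `r`, the second `x`-derivative of the sheared
function `g` is asymptotic to `α * (α - 1) * G_M(1, r) * x ^ (α - 2)`. -/
lemma tendsto_dX_sq_shear (g G : smoothFn) {ψ : ℝ → ℝ} (hψ : ContDiff ℝ (⊤ : ℕ∞) ψ)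
    (h : ∀ x y, g.1 (x, y) = G.1 (x, y - ψ x)) {M r : ℝ} (hM : 1 ≤ M) (hr : r ≠ 0)
    (hψ0 : ∀ j : ℕ, (j : ℝ) < M → iteratedDeriv j ψ 0 = 0)
    (h1 : deriv (fun y => RMpart (fun x y => G.1 (x, y)) M 1 y) r = 0)
    (h2 : iteratedDeriv 2 (fun y => RMpart (fun x y => G.1 (x, y)) M 1 y) r = 0) :
    Tendsto (fun z : ℝ × ℝ => z.1 ^ 2 * ((dX ^ 2) g).1 (z.1, z.2 * z.1 ^ M + ψ z.1) /
        z.1 ^ alphaM (fun x y => G.1 (x, y)) M) (𝓝[>] 0 ×ˢ 𝓝 r)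
      (𝓝 (alphaM (fun x y => G.1 (x, y)) M * (alphaM (fun x y => G.1 (x, y)) M - 1) *
        RMpart (fun x y => G.1 (x, y)) M 1 r)) := by
  set R : ℝ → ℝ → ℝ := fun x y => G.1 (x, y)
  set α := alphaM R M
  obtain ⟨N, hN⟩ : ∃ N : ℕ, α < N ∧ 2 ≤ N := by
    obtain ⟨N, hN⟩ := exists_nat_gt α
    exact ⟨N + 2, by push_cast; linarith, by omega⟩
  have hsum := RMpart_one_eq_sum hM hN.1
  simp_rw [hsum] at h1 h2
  rw [hsum]
  set k : ℕ × ℕ → ℝ := fun p => if (p.1 : ℝ) + M * p.2 = α then tcoeff R p.1 p.2 else 0 with hk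
  have hka : ∀ p, k p ≠ 0 → (p.1 : ℝ) = α - M * p.2 := by
    intro p hp
    have : (p.1 : ℝ) + M * p.2 = α := by
      by_contra hc
      exact hp (if_neg hc)
    linarith
  have hd : ∀ n : ℕ, (n.descFactorial 2 : ℝ) = n * (n - 1) := by
    rintro (_ | n) <;> simp [Nat.descFactorial, mul_comm]
  have lim : ∀ (i j : ℕ) (A B D : ℝ), i + j ≤ 2 →
      (∀ p, k p ≠ 0 → (p.1.descFactorial i * p.2.descFactorial j : ℝ) =
        A + B * p.2 + D * (p.2 * (p.2 - 1))) →
      Tendsto (fun z : ℝ × ℝ => z.1 ^ i * (z.2 * z.1 ^ M) ^ j *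
        ((dX ^ i * dY ^ j) G).1 (z.1, z.2 * z.1 ^ M) / z.1 ^ α) (𝓝[>] 0 ×ˢ 𝓝 r)
        (𝓝 (A * ∑ p ∈ Finset.range N ×ˢ Finset.range N, k p * r ^ p.2)) := by
    intro i j A B D hij he
    rw [← sum_mul_quadratic_eq _ k _ r A B D h1 h2 he]
    convert tendsto_partials G hM r (fun a b hab => alphaM_le (zero_le_one.trans hM) hab) hN.1
      (hij.trans hN.2) using 4 with p
    simp only [hk, ite_mul, zero_mul]
    rfl
  have l20 := lim 2 0 (α * (α - 1)) (M ^ 2 + M - 2 * α * M) (M ^ 2) le_rfl fun p hp => by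
    rw [hd, hka p hp, Nat.descFactorial_zero]
    push_cast
    ring
  have l11 := lim 1 1 0 (α - M) (-M) le_rfl fun p hp => by
    rw [Nat.descFactorial_one, hka p hp, Nat.descFactorial_one]
    ring
  have l02 := lim 0 2 0 0 1 le_rfl fun p _ => by
    rw [hd, Nat.descFactorial_zero]
    push_cast
    ring
  have l01 := lim 0 1 0 1 0 (by omega) fun p _ => by simp
  rw [zero_mul, ← Asymptotics.isLittleO_one_iff ℝ] at l11 l02 l01
  have u := isBigO_derivs_div hψ hr hψ0 1
  have v := isBigO_derivs_div hψ hr hψ0 2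
  have e11 := (Asymptotics.isLittleO_one_iff ℝ).1
    ((u.mul_isLittleO l11).congr_right fun _ => one_mul (1 : ℝ))
  have e02 := (Asymptotics.isLittleO_one_iff ℝ).1
    (((u.mul u).mul_isLittleO l02).congr_right fun _ => by norm_num)
  have e01 := (Asymptotics.isLittleO_one_iff ℝ).1
    ((v.mul_isLittleO l01).congr_right fun _ => one_mul (1 : ℝ))
  have main := ((l20.sub (e11.const_mul 2)).add e02).sub e01
  rw [mul_zero, sub_zero, add_zero, sub_zero] at main
  refine main.congr' ?_
  have ht : ∀ᶠ z : ℝ × ℝ in 𝓝[>] 0 ×ˢ 𝓝 r, z.2 ≠ 0 :=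
    tendsto_snd.eventually (isOpen_ne.mem_nhds hr)
  filter_upwards [eventually_fst_pos r, ht] with z hz hzt
  have hzM := (Real.rpow_pos_of_pos hz M).ne'
  have hzα := (Real.rpow_pos_of_pos hz α).ne'
  rw [dX_sq_shear g G hψ h, add_sub_cancel_right, iteratedDeriv_one,
    show iteratedDeriv 2 ψ = deriv (deriv ψ) by rw [iteratedDeriv_succ, iteratedDeriv_one]]
  field_simp

lemma fderiv_shear_eq_zero (g G : smoothFn) {ψ : ℝ → ℝ} (hψ : Differentiable ℝ ψ) (hψ0 : ψ 0 = 0)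
    (h : ∀ p : ℝ × ℝ, G.1 p = g.1 (p.1, p.2 + ψ p.1)) (hg : fderiv ℝ g.1 0 = 0) :
    fderiv ℝ G.1 0 = 0 := by
  have hs : Differentiable ℝ fun p : ℝ × ℝ => (p.1, p.2 + ψ p.1) :=
    differentiable_fst.prodMk (differentiable_snd.add (hψ.comp differentiable_fst))
  rw [show G.1 = g.1 ∘ fun p : ℝ × ℝ => (p.1, p.2 + ψ p.1) from funext h,
    fderiv_comp _ (smoothFn_differentiable g _) (hs _)]
  simp [hψ0, ← Prod.zero_eq_mk, hg]

lemma two_le_of_tcoeff_ne_zero (G : smoothFn) (h0 : G.1 0 = 0) (h1 : fderiv ℝ G.1 0 = 0) {a b : ℕ}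
    (h : tcoeff (fun x y => G.1 (x, y)) a b ≠ 0) : 2 ≤ a + b := by
  by_contra! hab
  refine h ?_
  rw [tcoeff, pderiv2_smoothFn, ← Prod.zero_eq_mk]
  obtain ⟨rfl, rfl⟩ | ⟨rfl, rfl⟩ | ⟨rfl, rfl⟩ :
      a = 0 ∧ b = 0 ∨ a = 1 ∧ b = 0 ∨ a = 0 ∧ b = 1 := by omega
  · simp [h0]
  · simp [dirDeriv_apply, h1]
  · simp [dirDeriv_apply, h1]

/-- Lemma 2.4: on the sliver `E''` (in the original coordinates), the second `x`-derivative
of `f` is bounded below by `C x^{α-2}`. -/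
theorem stmt_5 (f : ℝ → ℝ → ℝ) (U₀ : Set (ℝ × ℝ)) (hU₀ : U₀ ∈ 𝓝 ((0 : ℝ), (0 : ℝ)))
    (hsm : ContDiffOn ℝ (⊤ : ℕ∞) (fun p : ℝ × ℝ => f p.1 p.2) U₀)
    (h0 : f 0 0 = 0) (hgrad : fderiv ℝ (fun p : ℝ × ℝ => f p.1 p.2) (0, 0) = 0)
    (ψ : ℝ → ℝ) (hψ : ContDiff ℝ (⊤ : ℕ∞) ψ) (M : ℝ) (hM : 1 ≤ M)
    (hψ0 : ∀ j : ℕ, (j : ℝ) < M → iteratedDeriv j ψ 0 = 0)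
    (F : ℝ → ℝ → ℝ) (hF : ∀ x y, F x y = f x (y + ψ x))
    (r : ℝ) (hr : r ≠ 0)
    (hFM : RMpart F M 1 r ≠ 0)
    (hFM1 : deriv (fun y => RMpart F M 1 y) r = 0)
    (hFM2 : iteratedDeriv 2 (fun y => RMpart F M 1 y) r = 0) :
    ∃ C > (0 : ℝ), ∃ μ > (0 : ℝ), ∃ ν > (0 : ℝ), ∀ x y : ℝ,
      0 < x → x < μ → |y - ψ x - r * x ^ M| < ν * x ^ M →
      C * x ^ (alphaM F M - 2) ≤ |pderiv2 f 2 0 x y| := by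
  obtain ⟨g, hfg⟩ := exists_smoothFn_eventuallyEq hU₀ hsm
  have hψ00 : ψ 0 = 0 := by simpa using hψ0 0 (by simpa using zero_lt_one.trans_le hM)
  have hshear : ContDiff ℝ (⊤ : ℕ∞) fun p : ℝ × ℝ => (p.1, p.2 + ψ p.1) :=
    contDiff_fst.prodMk (contDiff_snd.add (hψ.comp contDiff_fst))
  let G : smoothFn := ⟨fun p => g.1 (p.1, p.2 + ψ p.1),
    show ContDiff ℝ (⊤ : ℕ∞) _ from (smoothFn_contDiff g).comp hshear⟩
  have hFG : (fun p : ℝ × ℝ => F p.1 p.2) =ᶠ[𝓝 0] fun p => G.1 (p.1, p.2) := by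
    have ht : Tendsto (fun p : ℝ × ℝ => (p.1, p.2 + ψ p.1)) (𝓝 0) (𝓝 0) := by
      simpa [hψ00, Prod.zero_eq_mk] using hshear.continuous.tendsto 0
    filter_upwards [ht.eventually hfg] with p hp
    rw [hF]
    exact hp
  have hc := tcoeff_congr (g := fun x y => G.1 (x, y)) hFG
  have hα : alphaM F M = alphaM (fun x y => G.1 (x, y)) M := by simp only [alphaM, tsupp, hc]
  have hRM : RMpart F M = RMpart (fun x y => G.1 (x, y)) M := by
    ext x y
    simp only [RMpart, hα, tsupp, hc]
  rw [hRM] at hFM hFM1 hFM2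
  rw [hα]
  have hlim := tendsto_dX_sq_shear g G hψ (fun x y => by simp [G]) hM hr hψ0 hFM1 hFM2
  set α := alphaM (fun x y => G.1 (x, y)) M
  have hα2 : 2 ≤ α := by
    obtain ⟨a, b, hab, hαab⟩ := exists_of_RMpart_ne_zero hFM
    have hg0 : g.1 0 = 0 := by rw [← hfg.eq_of_nhds]; exact h0
    have hG0 : G.1 0 = 0 := by simpa [G, hψ00, Prod.zero_eq_mk] using hg0
    have h2 := two_le_of_tcoeff_ne_zero G hG0 (fderiv_shear_eq_zero g G
      (hψ.differentiable (by simp)) hψ00 (fun _ => rfl) (hfg.fderiv_eq.symm.trans hgrad)) hab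
    have h2' : (2 : ℝ) ≤ a + b := by exact_mod_cast h2
    have hb : (b : ℝ) ≤ M * b := le_mul_of_one_le_left (by positivity) hM
    linarith
  set L := α * (α - 1) * RMpart (fun x y => G.1 (x, y)) M 1 r
  have hLpos : 0 < |L| :=
    abs_pos.2 (mul_ne_zero (mul_ne_zero (by linarith) (by linarith)) hFM)
  have hnear : Tendsto (fun z : ℝ × ℝ => (z.1, z.2 * z.1 ^ M + ψ z.1)) (𝓝[>] 0 ×ˢ 𝓝 r) (𝓝 0) := by
    have hx : Tendsto (fun z : ℝ × ℝ => z.1) (𝓝[>] 0 ×ˢ 𝓝 r) (𝓝 0) :=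
      tendsto_fst.mono_right nhdsWithin_le_nhds
    have hp := tendsto_fst_rpow_nhdsGT (r := r) (zero_le_one.trans hM)
    rw [if_neg (by linarith)] at hp
    have hψt := (hψ.continuous.tendsto 0).comp hx
    rw [hψ00] at hψt
    simpa [Prod.zero_eq_mk] using
      hx.prodMk_nhds (((tendsto_snd (f := 𝓝[>] (0 : ℝ)) (g := 𝓝 r)).mul hp).add hψt)
  have hev := (hlim.abs.eventually_const_lt (half_lt_self hLpos)).and
    (hnear.eventually (eventually_eventually_nhds.2 hfg))
  obtain ⟨pa, hpa, pb, hpb, hP⟩ := eventually_prod_iff.1 hev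
  obtain ⟨μ, hμ, hμs⟩ := mem_nhdsGT_iff_exists_Ioo_subset.1 hpa
  obtain ⟨ν, hν, hνs⟩ := Metric.eventually_nhds_iff.1 hpb
  refine ⟨|L| / 2, by positivity, μ, hμ, ν, hν, fun x y hx hxμ hy => ?_⟩
  have hxM := Real.rpow_pos_of_pos hx M
  have hxα := Real.rpow_pos_of_pos hx α
  have ht : dist ((y - ψ x) / x ^ M) r < ν := by
    rw [Real.dist_eq, div_sub' hxM.ne', abs_div, abs_of_pos hxM, div_lt_iff₀ hxM, mul_comm (x ^ M)]
    exact hy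
  obtain ⟨hbound, hnhds⟩ := hP (hμs ⟨hx, hxμ⟩) (hνs ht)
  simp only [div_mul_cancel₀ _ hxM.ne', sub_add_cancel] at hbound hnhds
  have hpd : pderiv2 f 2 0 x y = ((dX ^ 2) g).1 (x, y) := by
    rw [pderiv2_congr (g := fun x y => g.1 (x, y)) hnhds, pderiv2_smoothFn]
    simp
  rw [hpd, Real.rpow_sub hx, Real.rpow_two, ← mul_div_assoc, div_le_iff₀ (by positivity)]
  rw [abs_div, abs_mul (x ^ 2), abs_of_pos hxα, abs_of_pos (by positivity : 0 < x ^ 2),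
    lt_div_iff₀ hxα] at hbound
  linarith

end
end
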